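/- Let n ≥ 3, N = 2^⌊n/2⌋, and let α₁,…,αₙ be complex N×N matrices satisfying the Clifford relations. Let ψ : B₁ → ℂᴺ be of class C^{1,α} on the open unit ball B₁ ⊂ ℝⁿ for some α ∈ (0,1), not identically zero, and satisfying the critical Dirac equation Dψ(x) = |ψ(x)|^{2/(n−1)} ψ(x) pointwise on B₁. Then the nodal set Z(ψ) = { x ∈ B₁ : ψ(x) = 0 } has Hausdorff dimension at most n − 2. -/

import Mathlib

open MeasureTheory Metric Filter Matrix
open scoped ENNReal NNReal

noncomputable section

/-- The Clifford anticommutation relations `αⱼαₖ + αₖαⱼ = -2 δⱼₖ Id`. -/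
def CliffordRel {n N : ℕ} (α : Fin n → Matrix (Fin N) (Fin N) ℂ) : Prop :=
  ∀ j k, α j * α k + α k * α j = (-2 : ℂ) • (if j = k then (1 : Matrix (Fin N) (Fin N) ℂ) else 0)

/-- The Euclidean Dirac operator `Dψ = Σⱼ αⱼ ∂ⱼψ`. -/
def diracOp {n N : ℕ} (α : Fin n → Matrix (Fin N) (Fin N) ℂ)
    (ψ : EuclideanSpace ℝ (Fin n) → EuclideanSpace ℂ (Fin N))
    (x : EuclideanSpace ℝ (Fin n)) : EuclideanSpace ℂ (Fin N) :=
  ∑ j : Fin n, Matrix.toEuclideanLin (α j) (fderiv ℝ ψ x (EuclideanSpace.single j (1:ℝ)))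

/-!
Averaging an inner product over the `αⱼ` makes them skew-Hermitian, so that `v ↦ ∑ vⱼ αⱼ` is a
Clifford multiplication, and the equation gives `|Dψ| ≤ C |ψ|`. Multiplying the Dirac equation by
the radial vector writes the Euler derivative `r ∂ᵣ ψ` as a symmetric operator acting along spheres
plus an error of size `C r |ψ|`. Almgren's frequency is the Rayleigh quotient of that operator,
hence almost monotone in `r`; this yields doubling, unique continuation, and frequency at least `1`
at the zeros of `ψ`.

If the frequency is pinched, that is nearly constant in `r`, with the same value at nearby points
`x` and `y`, then `ψ` is nearly homogeneous about both, and the derivative of `ψ` in the direction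
`y - x` is small. But `Dψ ≈ 0` prevents the derivative of `ψ` from being concentrated in a single
direction, so there are two orthogonal directions in which the derivative is not small, and the
zeros with pinched frequency lie in a thin neighbourhood of a plane of codimension two. Almost
monotonicity makes the frequency converge as `r → 0`, so the nodal set is a countable union of
pieces on which it is pinched at all small scales; covering such a piece over and over by smaller
balls bounds its dimension.
-/

section HausdorffDimension

variable {X : Type*} [MetricSpace X]

lemma dimH_le_of_forall_exists_mem_nhdsWithin [SecondCountableTopology X] {A : Set X} {d : ℝ≥0∞}
    (h : ∀ x ∈ A, ∃ t ∈ nhdsWithin x A, dimH t ≤ d) : dimH A ≤ d := by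
  by_contra! hd
  obtain ⟨x, hx, hlt⟩ := exists_mem_nhdsWithin_lt_dimH_of_lt_dimH hd
  obtain ⟨t, ht, htd⟩ := h x hx
  exact (hlt t ht).not_ge htd

lemma ediam_closedBall_le_ofReal (c : X) (r : ℝ) :
    ediam (closedBall c r) ≤ ENNReal.ofReal (2 * r) := by
  refine ediam_le fun y hy z hz => ?_
  rw [edist_dist]
  gcongr
  calc dist y z ≤ dist y c + dist z c := dist_triangle_right y z c
    _ ≤ 2 * r := by rw [mem_closedBall] at hy hz; linarith

lemma card_mul_rpow_le {M k m : ℕ} {θ r₀ : ℝ} (hm : m ≤ M ^ k) (hθ : 0 < θ) (hr₀ : 0 < r₀) {s : ℝ}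
    (hM : M * θ ^ s ≤ 1) : m * (2 * (θ ^ k * r₀)) ^ s ≤ (2 * r₀) ^ s := by
  have hpow : (2 * (θ ^ k * r₀)) ^ s = (θ ^ s) ^ k * (2 * r₀) ^ s := by
    rw [mul_left_comm, Real.mul_rpow (by positivity) (by positivity), Real.rpow_pow_comm hθ.le]
  calc m * (2 * (θ ^ k * r₀)) ^ s ≤ (M : ℝ) ^ k * ((θ ^ s) ^ k * (2 * r₀) ^ s) := by
        rw [hpow]
        gcongr
        exact_mod_cast hm
    _ = (M * θ ^ s) ^ k * (2 * r₀) ^ s := by rw [mul_pow, mul_assoc]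
    _ ≤ 1 * (2 * r₀) ^ s := by
        gcongr
        exact pow_le_one₀ (by positivity) hM
    _ = (2 * r₀) ^ s := one_mul _

/-- The trace on `A` of every ball of radius `r ≤ r₀` centred in `A` is covered by `M` balls of
radius `θ * r` centred in `A`; the scale-invariant covering property that bounds dimension. -/
def HasBallCovers (A : Set X) (M : ℕ) (θ r₀ : ℝ) : Prop :=
  ∀ x ∈ A, ∀ r ∈ Set.Ioc 0 r₀, ∃ F : Finset X, F.card ≤ M ∧ ↑F ⊆ A ∧
    A ∩ closedBall x r ⊆ ⋃ c ∈ F, closedBall c (θ * r)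

namespace HasBallCovers

variable {A : Set X} {M : ℕ} {θ r₀ : ℝ}

lemma iterate (h : HasBallCovers A M θ r₀) (hθ : 0 < θ) (hθ1 : θ ≤ 1) (k : ℕ) :
    HasBallCovers A (M ^ k) (θ ^ k) r₀ := by
  classical
  induction k with
  | zero => exact fun x hx r _ => ⟨{x}, by simp, by simpa using hx, by simp⟩
  | succ k ih =>
    intro x hx r hr
    obtain ⟨F, hFcard, hFA, hFcover⟩ := h x hx r hr
    have hθr : θ * r ∈ Set.Ioc 0 r₀ :=
      ⟨mul_pos hθ hr.1, (mul_le_of_le_one_left hr.1.le hθ1).trans hr.2⟩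
    have hrefine := fun c hc => ih c hc _ hθr
    choose! G hGcard hGA hGcover using hrefine
    refine ⟨F.biUnion G, ?_, ?_, ?_⟩
    · calc (F.biUnion G).card ≤ F.card * M ^ k :=
            Finset.card_biUnion_le_card_mul F G (M ^ k) fun c hc => hGcard c (hFA hc)
        _ ≤ M * M ^ k := by gcongr
        _ = M ^ (k + 1) := (pow_succ' M k).symm
    · rw [Finset.coe_biUnion]
      exact Set.iUnion₂_subset fun c hc => hGA c (hFA hc)
    · intro y hy
      obtain ⟨c, hc, hyc⟩ := Set.mem_iUnion₂.1 (hFcover hy)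
      obtain ⟨d, hd, hyd⟩ := Set.mem_iUnion₂.1 (hGcover c (hFA hc) ⟨hy.1, hyc⟩)
      refine Set.mem_iUnion₂.2 ⟨d, Finset.mem_biUnion.2 ⟨c, hc, hd⟩, ?_⟩
      rwa [pow_succ, mul_assoc]

lemma hausdorffMeasure_inter_closedBall_le [MeasurableSpace X] [BorelSpace X]
    (h : HasBallCovers A M θ r₀) (hθ : 0 < θ) (hθ1 : θ < 1) (hr₀ : 0 < r₀) {s : ℝ} (hs : 0 ≤ s)
    (hM : M * θ ^ s ≤ 1) {x : X} (hx : x ∈ A) :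
    Measure.hausdorffMeasure s (A ∩ closedBall x r₀) ≤ ENNReal.ofReal ((2 * r₀) ^ s) := by
  choose F hcard _ hcover using fun k => h.iterate hθ hθ1.le k x hx r₀ ⟨hr₀, le_rfl⟩
  have hradius : Tendsto (fun k : ℕ => ENNReal.ofReal (2 * (θ ^ k * r₀))) atTop (nhds 0) := by
    have : Tendsto (fun k : ℕ => 2 * (θ ^ k * r₀)) atTop (nhds (2 * (0 * r₀))) :=
      ((tendsto_pow_atTop_nhds_zero_of_lt_one hθ.le hθ1).mul_const _).const_mul _
    simpa using ENNReal.tendsto_ofReal this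
  have hsum (k : ℕ) : ∑ c : F k, ediam (closedBall (c : X) (θ ^ k * r₀)) ^ s
      ≤ ENNReal.ofReal ((2 * r₀) ^ s) := by
    calc ∑ c : F k, ediam (closedBall (c : X) (θ ^ k * r₀)) ^ s
        ≤ ∑ _c : F k, ENNReal.ofReal ((2 * (θ ^ k * r₀)) ^ s) := by
          refine Finset.sum_le_sum fun c _ => ?_
          rw [← ENNReal.ofReal_rpow_of_pos (by positivity)]
          gcongr
          exact ediam_closedBall_le_ofReal _ _
      _ = ENNReal.ofReal ((F k).card * (2 * (θ ^ k * r₀)) ^ s) := by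
          simp [ENNReal.ofReal_mul]
      _ ≤ ENNReal.ofReal ((2 * r₀) ^ s) :=
          ENNReal.ofReal_le_ofReal (card_mul_rpow_le (hcard k) hθ hr₀ hM)
  calc Measure.hausdorffMeasure s (A ∩ closedBall x r₀)
      ≤ liminf (fun k => ∑ c : F k, ediam (closedBall (c : X) (θ ^ k * r₀)) ^ s) atTop :=
        Measure.hausdorffMeasure_le_liminf_sum s _ _ hradius _
          (.of_forall fun _ _ => ediam_closedBall_le_ofReal _ _)
          (.of_forall fun k => by simpa [Set.iUnion_subtype] using hcover k)
    _ ≤ liminf (fun _ : ℕ => ENNReal.ofReal ((2 * r₀) ^ s)) atTop :=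
        liminf_le_liminf (.of_forall hsum)
    _ = ENNReal.ofReal ((2 * r₀) ^ s) := liminf_const _

lemma dimH_le [SecondCountableTopology X] (h : HasBallCovers A M θ r₀) (hθ : 0 < θ) (hθ1 : θ < 1)
    (hr₀ : 0 < r₀) {s : ℝ≥0} (hM : M * θ ^ (s : ℝ) ≤ 1) : dimH A ≤ s := by
  borelize X
  refine dimH_le_of_forall_exists_mem_nhdsWithin fun x hx =>
    ⟨A ∩ closedBall x r₀, inter_mem_nhdsWithin A (closedBall_mem_nhds x hr₀), ?_⟩
  exact dimH_le_of_hausdorffMeasure_ne_top <| ne_top_of_le_ne_top ENNReal.ofReal_ne_top <|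
    h.hausdorffMeasure_inter_closedBall_le hθ hθ1 hr₀ s.2 hM hx

end HasBallCovers

end HausdorffDimension

section GridCover

lemma exists_finset_representatives {X κ : Type*} {S : Set X} {g : X → κ} {T : Finset κ}
    (hg : Set.MapsTo g S T) :
    ∃ F : Finset X, F.card ≤ T.card ∧ ↑F ⊆ S ∧ ∀ y ∈ S, ∃ c ∈ F, g c = g y := by
  obtain ⟨S', hS'S, hbij⟩ := Set.exists_subset_bijOn S g
  have hfin : S'.Finite := hbij.finite_iff_finite.2 (T.finite_toSet.subset hg.image_subset)
  refine ⟨hfin.toFinset, ?_, by simpa using hS'S, fun y hy => ?_⟩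
  · exact Finset.card_le_card_of_injOn g (fun c hc => hg (hS'S (by simpa using hc)))
      (by simpa using hbij.injOn)
  · simpa using hbij.surjOn ⟨y, hy, rfl⟩

lemma floor_mem_Icc_of_abs_le {t : ℝ} {L : ℕ} (h : |t| ≤ L) : ⌊t⌋ ∈ Finset.Icc (-L : ℤ) L := by
  obtain ⟨hlo, hhi⟩ := abs_le.1 h
  rw [Finset.mem_Icc]
  refine ⟨Int.le_floor.2 (by exact_mod_cast hlo), ?_⟩
  exact_mod_cast (Int.floor_le t).trans hhi

lemma card_piFinset_ite_eq_or_eq {ι κ : Type*} [Fintype ι] [DecidableEq ι] (P Q : Finset κ)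
    {i₁ i₂ : ι} (hi : i₁ ≠ i₂) :
    (Fintype.piFinset fun i => if i = i₁ ∨ i = i₂ then P else Q).card
      = P.card ^ 2 * Q.card ^ (Fintype.card ι - 2) := by
  have hpair : Finset.univ.filter (fun i : ι => i = i₁ ∨ i = i₂) = {i₁, i₂} := by
    ext i; simp
  have hcompl : Finset.univ.filter (fun i : ι => ¬(i = i₁ ∨ i = i₂)) = {i₁, i₂}ᶜ := by
    ext i; simp
  simp only [Fintype.card_piFinset, apply_ite Finset.card, Finset.prod_ite, Finset.prod_const,
    hpair, hcompl, Finset.card_compl, Finset.card_pair hi]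

variable {ι V : Type*} [Fintype ι] [NormedAddCommGroup V] [InnerProductSpace ℝ V]

lemma norm_le_sqrt_card_mul_of_abs_inner_le (b : OrthonormalBasis ι ℝ V) {v : V} {ρ : ℝ}
    (hρ : 0 ≤ ρ) (h : ∀ i, |inner ℝ (b i) v| ≤ ρ) : ‖v‖ ≤ √(Fintype.card ι) * ρ := by
  refine le_of_sq_le_sq ?_ (by positivity)
  calc ‖v‖ ^ 2 = ∑ i, |inner ℝ (b i) v| ^ 2 := by simp only [sq_abs, b.sum_sq_inner_right]
    _ ≤ ∑ _i : ι, ρ ^ 2 := by gcongr; exact h _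
    _ = (√(Fintype.card ι) * ρ) ^ 2 := by rw [mul_pow, Real.sq_sqrt (by positivity)]; simp

/-- Points of `S` whose coordinates fall in the same cells of a grid of mesh `r / m` are
`√d * r / m`-close, and the two thin directions only meet the three cells `-1, 0, 1`. -/
lemma exists_finset_cover_of_abs_inner_le (b : OrthonormalBasis ι ℝ V) {S : Set V} {x₀ : V} {r : ℝ}
    (hr : 0 < r) {m : ℕ} (hm : m ≠ 0) (hS : S ⊆ closedBall x₀ r) {i₁ i₂ : ι} (hi : i₁ ≠ i₂)
    (hthin₁ : ∀ y ∈ S, |inner ℝ (b i₁) (y - x₀)| ≤ r / m)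
    (hthin₂ : ∀ y ∈ S, |inner ℝ (b i₂) (y - x₀)| ≤ r / m) :
    ∃ F : Finset V, F.card ≤ 9 * (2 * m + 1) ^ (Fintype.card ι - 2) ∧ ↑F ⊆ S ∧
      S ⊆ ⋃ c ∈ F, closedBall c (√(Fintype.card ι) / m * r) := by
  classical
  have hmesh : 0 < r / m := by positivity
  let cell (y : V) (i : ι) : ℤ := ⌊inner ℝ (b i) (y - x₀) / (r / m)⌋
  have hcell {y : V} {i : ι} {L : ℕ} (h : |inner ℝ (b i) (y - x₀)| ≤ L * (r / m)) :
      cell y i ∈ Finset.Icc (-L : ℤ) L := by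
    apply floor_mem_Icc_of_abs_le
    rwa [abs_div, abs_of_pos hmesh, div_le_iff₀ hmesh]
  have hmaps : Set.MapsTo cell S (Fintype.piFinset fun i =>
      if i = i₁ ∨ i = i₂ then Finset.Icc (-1 : ℤ) 1 else Finset.Icc (-m : ℤ) m) := by
    intro y hy
    rw [Finset.mem_coe, Fintype.mem_piFinset]
    intro i
    split_ifs with hthin
    · refine hcell (L := 1) ?_
      rw [Nat.cast_one, one_mul]
      rcases hthin with rfl | rfl
      exacts [hthin₁ y hy, hthin₂ y hy]
    · refine hcell ?_
      rw [mul_div_cancel₀ _ (by positivity)]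
      calc |inner ℝ (b i) (y - x₀)| ≤ ‖b i‖ * ‖y - x₀‖ := abs_real_inner_le_norm _ _
        _ = dist y x₀ := by rw [b.norm_eq_one, one_mul, dist_eq_norm]
        _ ≤ r := hS hy
  obtain ⟨F, hcard, hFS, hF⟩ := exists_finset_representatives hmaps
  refine ⟨F, hcard.trans_eq ?_, hFS, fun y hy => ?_⟩
  · rw [card_piFinset_ite_eq_or_eq _ _ hi, Int.card_Icc, Int.card_Icc]
    congr 2
    lia
  · obtain ⟨c, hc, hcy⟩ := hF y hy
    refine Set.mem_iUnion₂.2 ⟨c, hc, ?_⟩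
    rw [mem_closedBall, dist_eq_norm, div_mul_comm, mul_comm]
    refine norm_le_sqrt_card_mul_of_abs_inner_le b hmesh.le fun i => ?_
    have hlt := Int.abs_sub_lt_one_of_floor_eq_floor (congrFun hcy.symm i)
    rw [← sub_div, ← inner_sub_right, sub_sub_sub_cancel_right, abs_div, abs_of_pos hmesh,
      div_lt_one hmesh] at hlt
    exact hlt.le

end GridCover

section Frequency

variable {H : Type*} [NormedAddCommGroup H] [InnerProductSpace ℝ H]

/-- A curve `u` in a Hilbert space whose Euler derivative `r u'` is, on `(0, R)`, a symmetric part
`a` plus an error `f` of relative size `C r`: the abstract setting of Almgren's frequency. -/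
structure IsFrequencySystem (u a f : ℝ → H) (C R : ℝ) : Prop where
  hasDerivAt : ∀ r ∈ Set.Ioo 0 R, HasDerivAt u (r⁻¹ • (a r + f r)) r
  continuous : Continuous a
  symm : ∀ r s, inner ℝ (a s) (u r) = inner ℝ (u s) (a r)
  norm_le : ∀ r ∈ Set.Ioo 0 R, ‖f r‖ ≤ C * r * ‖u r‖

/-- Almgren's frequency `⟪a, u⟫ / ‖u‖²` (equal to `0` where `u` vanishes). -/
def frequency (u a : ℝ → H) (r : ℝ) : ℝ := inner ℝ (a r) (u r) / ‖u r‖ ^ 2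

lemma inner_eq_frequency_mul (u a : ℝ → H) (r : ℝ) :
    inner ℝ (u r) (a r) = frequency u a r * ‖u r‖ ^ 2 := by
  rcases eq_or_ne (u r) 0 with hu | hu
  · simp [hu]
  · rw [frequency, real_inner_comm, div_mul_cancel₀ _ (by positivity)]

lemma norm_sub_frequency_smul_sq (u a : ℝ → H) (r : ℝ) :
    ‖a r - frequency u a r • u r‖ ^ 2 = ‖a r‖ ^ 2 - frequency u a r ^ 2 * ‖u r‖ ^ 2 := by
  rw [norm_sub_sq_real, inner_smul_right, real_inner_comm, inner_eq_frequency_mul, norm_smul,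
    mul_pow, Real.norm_eq_abs, sq_abs]
  ring

/-- Bound for `‖r u' - q u‖² / ‖u‖²` at some scale between `2 r` and `3 r` when the frequency stays
within `δ` of `q` there. -/
def pinchingError (C δ r : ℝ) : ℝ := 3 * (6 * δ + δ ^ 2 + 18 * C ^ 2 * r ^ 2)

lemma pinchingError_nonneg {δ : ℝ} (hδ : 0 ≤ δ) (C r : ℝ) : 0 ≤ pinchingError C δ r := by
  unfold pinchingError
  positivity

namespace IsFrequencySystem

variable {u a f : ℝ → H} {C R : ℝ}

lemma const_nonneg (h : IsFrequencySystem u a f C R) {r : ℝ} (hr : r ∈ Set.Ioo 0 R)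
    (hu : u r ≠ 0) : 0 ≤ C := by
  have hCr : 0 ≤ C * (r * ‖u r‖) := by
    rw [← mul_assoc]
    exact (norm_nonneg _).trans (h.norm_le r hr)
  exact nonneg_of_mul_nonneg_left hCr (mul_pos hr.1 (norm_pos_iff.2 hu))

lemma norm_sq_le (h : IsFrequencySystem u a f C R) {r : ℝ} (hr : r ∈ Set.Ioo 0 R) :
    ‖f r‖ ^ 2 ≤ C ^ 2 * r ^ 2 * ‖u r‖ ^ 2 := by
  calc ‖f r‖ ^ 2 ≤ (C * r * ‖u r‖) ^ 2 := by gcongr; exact h.norm_le r hr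
    _ = C ^ 2 * r ^ 2 * ‖u r‖ ^ 2 := by ring

lemma hasDerivAt_norm_sq (h : IsFrequencySystem u a f C R) {r : ℝ} (hr : r ∈ Set.Ioo 0 R) :
    HasDerivAt (fun s => ‖u s‖ ^ 2) (2 * r⁻¹ * inner ℝ (u r) (a r + f r)) r := by
  convert (h.hasDerivAt r hr).norm_sq using 1
  rw [inner_smul_right, mul_assoc]

/-- Only `a` is continuous, but symmetry turns the difference quotient of `⟪a, u⟫` into
`⟪a s + a r, (u s - u r) / (s - r)⟫`. -/
lemma hasDerivAt_inner (h : IsFrequencySystem u a f C R) {r : ℝ} (hr : r ∈ Set.Ioo 0 R) :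
    HasDerivAt (fun s => inner ℝ (a s) (u s)) (2 * r⁻¹ * inner ℝ (a r) (a r + f r)) r := by
  rw [hasDerivAt_iff_tendsto_slope]
  have hsum : Tendsto (fun s => a s + a r) (nhdsWithin r {r}ᶜ) (nhds (a r + a r)) :=
    ((h.continuous.tendsto r).mono_left nhdsWithin_le_nhds).add_const _
  have hlim := hsum.inner (𝕜 := ℝ) (hasDerivAt_iff_tendsto_slope.1 (h.hasDerivAt r hr))
  have hvalue : (2 * r⁻¹ * inner ℝ (a r) (a r + f r) : ℝ)
      = inner ℝ (a r + a r) (r⁻¹ • (a r + f r)) := by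
    rw [inner_smul_right, inner_add_left]
    ring
  rw [hvalue]
  refine hlim.congr fun s => ?_
  simp only [slope, vsub_eq_sub, smul_eq_mul, inner_smul_right, inner_add_left, inner_sub_right]
  rw [h.symm s r, real_inner_comm (a s) (u r)]
  ring

lemma exists_hasDerivAt_frequency (h : IsFrequencySystem u a f C R) {r : ℝ}
    (hr : r ∈ Set.Ioo 0 R) (hu : u r ≠ 0) :
    ∃ d, HasDerivAt (frequency u a) d r ∧
      ‖a r - frequency u a r • u r‖ ^ 2 ≤ (r * d + C ^ 2 * r ^ 2) * ‖u r‖ ^ 2 := by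
  have hsq : ‖u r‖ ^ 2 ≠ 0 := by positivity
  have hr0 : r ≠ 0 := hr.1.ne'
  set q := frequency u a r
  have hinner : inner ℝ (u r) (a r) = q * ‖u r‖ ^ 2 := inner_eq_frequency_mul u a r
  refine ⟨_, (h.hasDerivAt_inner hr).div (h.hasDerivAt_norm_sq hr) hsq, ?_⟩
  have hd : r * ((2 * r⁻¹ * inner ℝ (a r) (a r + f r) * ‖u r‖ ^ 2
      - inner ℝ (a r) (u r) * (2 * r⁻¹ * inner ℝ (u r) (a r + f r))) / (‖u r‖ ^ 2) ^ 2)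
      * ‖u r‖ ^ 2 = 2 * (‖a r - q • u r‖ ^ 2 + inner ℝ (a r - q • u r) (f r)) := by
    rw [norm_sub_frequency_smul_sq, real_inner_comm (u r), hinner, inner_sub_left,
      real_inner_smul_left, inner_add_right, inner_add_right, hinner, real_inner_self_eq_norm_sq]
    field_simp
    ring
  rw [add_mul, hd]
  have hcomplete := norm_add_sq_real (a r - q • u r) (f r)
  linarith [sq_nonneg ‖a r - q • u r + f r‖, h.norm_sq_le hr]

lemma monotoneOn_frequency_add (h : IsFrequencySystem u a f C R) {D : Set ℝ} (hD : Convex ℝ D)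
    (hDR : D ⊆ Set.Ioo 0 R) (hu : ∀ r ∈ D, u r ≠ 0) :
    MonotoneOn (fun r => frequency u a r + C ^ 2 * r ^ 2 / 2) D := by
  have hderiv : ∀ r ∈ D,
      ∃ d, HasDerivAt (fun r => frequency u a r + C ^ 2 * r ^ 2 / 2) d r ∧ 0 ≤ d := by
    intro r hr
    obtain ⟨d, hd, hbound⟩ := h.exists_hasDerivAt_frequency (hDR hr) (hu r hr)
    have hr0 : 0 < r := (hDR hr).1
    refine ⟨d + C ^ 2 * r, hd.add ?_, ?_⟩
    · exact (((hasDerivAt_pow 2 r).const_mul (C ^ 2)).div_const 2).congr_deriv (by ring)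
    · have hpos : 0 ≤ (d + C ^ 2 * r) * (r * ‖u r‖ ^ 2) :=
        ((sq_nonneg _).trans hbound).trans_eq (by ring)
      have := hu r hr
      exact nonneg_of_mul_nonneg_left hpos (by positivity)
  choose! d hd hd0 using hderiv
  refine monotoneOn_of_hasDerivWithinAt_nonneg hD (f' := d)
    (fun r hr => (hd r hr).continuousAt.continuousWithinAt)
    (fun r hr => (hd r (interior_subset hr)).hasDerivWithinAt)
    (fun r hr => hd0 r (interior_subset hr))

lemma frequency_le (h : IsFrequencySystem u a f C R) {r s : ℝ} (hr : 0 < r) (hrs : r ≤ s)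
    (hsR : s < R) (hu : ∀ t ∈ Set.Icc r s, u t ≠ 0) :
    frequency u a r ≤ frequency u a s + C ^ 2 * s ^ 2 / 2 := by
  have hmono := h.monotoneOn_frequency_add (convex_Icc r s)
    (fun t ht => ⟨hr.trans_le ht.1, ht.2.trans_lt hsR⟩) hu
    (Set.left_mem_Icc.2 hrs) (Set.right_mem_Icc.2 hrs) hrs
  exact (le_add_of_nonneg_right (by positivity)).trans hmono

lemma antitoneOn_norm_sq_mul (h : IsFrequencySystem u a f C R) {D : Set ℝ} (hD : Convex ℝ D)
    (hDR : D ⊆ Set.Ioo 0 R) {K : ℝ} (hK : ∀ r ∈ interior D, frequency u a r ≤ K) :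
    AntitoneOn (fun r => ‖u r‖ ^ 2 * r ^ (-(2 * K)) * Real.exp (-(2 * C * r))) D := by
  have hderiv : ∀ r ∈ D, HasDerivAt
      (fun r => ‖u r‖ ^ 2 * r ^ (-(2 * K)) * Real.exp (-(2 * C * r)))
      (r ^ (-(2 * K)) * Real.exp (-(2 * C * r)) * (2 * r⁻¹)
        * ((frequency u a r - K) * ‖u r‖ ^ 2 + (inner ℝ (u r) (f r) - C * r * ‖u r‖ ^ 2))) r := by
    intro r hr
    have hr0 : r ≠ 0 := (hDR hr).1.ne'
    have hexp : HasDerivAt (fun r : ℝ => -(2 * C * r)) (-(2 * C)) r := by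
      simpa using ((hasDerivAt_id r).const_mul (2 * C)).fun_neg
    refine (((h.hasDerivAt_norm_sq (hDR hr)).mul
      (Real.hasDerivAt_rpow_const (Or.inl hr0))).mul hexp.exp).congr_deriv ?_
    rw [Real.rpow_sub_one hr0, inner_add_right, inner_eq_frequency_mul]
    simp only [Pi.mul_apply]
    field_simp
    ring
  refine antitoneOn_of_hasDerivWithinAt_nonpos hD
    (fun r hr => (hderiv r hr).continuousAt.continuousWithinAt)
    (fun r hr => (hderiv r (interior_subset hr)).hasDerivWithinAt) fun r hr => ?_
  have hrR := hDR (interior_subset hr)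
  have hr0 := hrR.1
  have herror : inner ℝ (u r) (f r) ≤ C * r * ‖u r‖ ^ 2 := by
    calc inner ℝ (u r) (f r) ≤ ‖u r‖ * ‖f r‖ := real_inner_le_norm _ _
      _ ≤ ‖u r‖ * (C * r * ‖u r‖) := by gcongr; exact h.norm_le r hrR
      _ = C * r * ‖u r‖ ^ 2 := by ring
  have hgap := mul_nonpos_of_nonpos_of_nonneg (sub_nonpos.2 (hK r hr)) (sq_nonneg ‖u r‖)
  exact mul_nonpos_of_nonneg_of_nonpos (by positivity) (by linarith)

lemma norm_sq_mul_le (h : IsFrequencySystem u a f C R) {r s K : ℝ} (hr : 0 < r) (hrs : r ≤ s)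
    (hsR : s < R) (hK : ∀ t ∈ Set.Ioo r s, frequency u a t ≤ K) :
    ‖u s‖ ^ 2 * s ^ (-(2 * K)) * Real.exp (-(2 * C * s)) ≤
      ‖u r‖ ^ 2 * r ^ (-(2 * K)) * Real.exp (-(2 * C * r)) :=
  h.antitoneOn_norm_sq_mul (convex_Icc r s) (fun _ ht => ⟨hr.trans_le ht.1, ht.2.trans_lt hsR⟩)
    (by rwa [interior_Icc]) (Set.left_mem_Icc.2 hrs) (Set.right_mem_Icc.2 hrs) hrs

lemma norm_sq_four_mul_le (h : IsFrequencySystem u a f C R) {r K : ℝ} (hr : 0 < r)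
    (hrR : 4 * r < R) (hK : ∀ t ∈ Set.Ioo r (4 * r), frequency u a t ≤ K) :
    ‖u (4 * r)‖ ^ 2 ≤ 4 ^ (2 * K) * Real.exp (6 * C * r) * ‖u r‖ ^ 2 := by
  have hdecay := h.norm_sq_mul_le hr (by linarith) hrR hK
  rw [Real.mul_rpow zero_le_four hr.le, Real.rpow_neg zero_le_four,
    show -(2 * C * (4 * r)) = -(6 * C * r) + -(2 * C * r) by ring, Real.exp_add,
    Real.exp_neg (6 * C * r)] at hdecay
  rw [← inv_mul_le_iff₀ (by positivity)]
  refine le_of_mul_le_mul_right ?_ (show 0 < r ^ (-(2 * K)) * Real.exp (-(2 * C * r)) by positivity)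
  calc (4 ^ (2 * K) * Real.exp (6 * C * r))⁻¹ * ‖u (4 * r)‖ ^ 2
        * (r ^ (-(2 * K)) * Real.exp (-(2 * C * r)))
      = ‖u (4 * r)‖ ^ 2 * ((4 ^ (2 * K))⁻¹ * r ^ (-(2 * K)))
        * ((Real.exp (6 * C * r))⁻¹ * Real.exp (-(2 * C * r))) := by rw [mul_inv]; ring
    _ ≤ ‖u r‖ ^ 2 * r ^ (-(2 * K)) * Real.exp (-(2 * C * r)) := hdecay
    _ = ‖u r‖ ^ 2 * (r ^ (-(2 * K)) * Real.exp (-(2 * C * r))) := mul_assoc _ _ _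

/-- At the largest zero below `s` the frequency would be bounded, hence so would the decay of
`u`. -/
lemma ne_zero_of_ne_zero (h : IsFrequencySystem u a f C R) {r s : ℝ} (hr : 0 < r) (hrs : r ≤ s)
    (hsR : s < R) (hu : u s ≠ 0) : u r ≠ 0 := by
  intro hr0
  have hcont : ContinuousOn u (Set.Icc r s) := fun t ht =>
    (h.hasDerivAt t ⟨hr.trans_le ht.1, ht.2.trans_lt hsR⟩).continuousAt.continuousWithinAt
  have hcompact : IsCompact (Set.Icc r s ∩ u ⁻¹' {0}) :=
    isCompact_Icc.of_isClosed_subset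
      (hcont.preimage_isClosed_of_isClosed isClosed_Icc isClosed_singleton) Set.inter_subset_left
  obtain ⟨t, ⟨ht, ht0⟩, hmax⟩ :=
    hcompact.exists_isGreatest ⟨r, Set.left_mem_Icc.2 hrs, hr0⟩
  have htpos : 0 < t := hr.trans_le ht.1
  have hspos : 0 < s := hr.trans_le hrs
  have hnonzero : ∀ x ∈ Set.Ioc t s, u x ≠ 0 := fun x hx hx0 =>
    hx.1.not_ge (hmax ⟨⟨ht.1.trans hx.1.le, hx.2⟩, hx0⟩)
  have hdecay := h.norm_sq_mul_le htpos ht.2 hsR fun x hx =>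
    h.frequency_le (htpos.trans hx.1) hx.2.le hsR fun y hy =>
      hnonzero y ⟨hx.1.trans_le hy.1, hy.2⟩
  rw [Set.mem_preimage, Set.mem_singleton_iff] at ht0
  rw [ht0, norm_zero, zero_pow two_ne_zero, zero_mul, zero_mul] at hdecay
  exact hdecay.not_gt (by positivity)

/-- Were the frequency below `1` at scale `s`, the growth estimate would give
`‖u r‖² ≥ c r ^ (2 K)` with `K < 1` for all smaller `r`. -/
lemma one_le_frequency_add (h : IsFrequencySystem u a f C R) (hu : ∀ r ∈ Set.Ioo 0 R, u r ≠ 0)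
    {L : ℝ} (hL : ∀ r ∈ Set.Ioo 0 R, ‖u r‖ ≤ L * r) {s : ℝ} (hs : s ∈ Set.Ioo 0 R) :
    1 ≤ frequency u a s + C ^ 2 * s ^ 2 / 2 := by
  by_contra! hlt
  set K := frequency u a s + C ^ 2 * s ^ 2 / 2
  have hspos : 0 < s := hs.1
  have hbound : ∀ r ∈ Set.Ioc 0 s,
      ‖u s‖ ^ 2 * s ^ (-(2 * K)) * Real.exp (-(2 * C * s)) ≤ L ^ 2 * r ^ (2 - 2 * K) := by
    intro r hr
    have hrpos : 0 < r := hr.1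
    have hrR : r ∈ Set.Ioo 0 R := ⟨hrpos, hr.2.trans_lt hs.2⟩
    have hC := h.const_nonneg hrR (hu r hrR)
    calc ‖u s‖ ^ 2 * s ^ (-(2 * K)) * Real.exp (-(2 * C * s))
        ≤ ‖u r‖ ^ 2 * r ^ (-(2 * K)) * Real.exp (-(2 * C * r)) :=
          h.norm_sq_mul_le hrpos hr.2 hs.2 fun t ht =>
            h.frequency_le (hrpos.trans ht.1) ht.2.le hs.2 fun x hx =>
              hu x ⟨(hrpos.trans ht.1).trans_le hx.1, hx.2.trans_lt hs.2⟩
      _ ≤ (L * r) ^ 2 * r ^ (-(2 * K)) * 1 := by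
          gcongr
          · exact hL r hrR
          · exact Real.exp_le_one_iff.2 (neg_nonpos.2 (by positivity))
      _ = L ^ 2 * r ^ (2 - 2 * K) := by
          rw [sub_eq_add_neg, Real.rpow_add hrpos, Real.rpow_two]
          ring
  have hlim : Tendsto (fun r : ℝ => L ^ 2 * r ^ (2 - 2 * K)) (nhdsWithin 0 (Set.Ioi 0))
      (nhds 0) := by
    have hcont : ContinuousAt (fun r : ℝ => L ^ 2 * r ^ (2 - 2 * K)) 0 :=
      (Real.continuousAt_rpow_const 0 _ (Or.inr (by linarith))).const_mul _
    simpa [Real.zero_rpow (show 2 - 2 * K ≠ 0 by linarith)]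
      using hcont.tendsto.mono_left nhdsWithin_le_nhds
  have hle := ge_of_tendsto hlim (by filter_upwards [Ioc_mem_nhdsGT hspos] using hbound)
  have := hu s hs
  exact hle.not_gt (by positivity)

lemma exists_tendsto_frequency (h : IsFrequencySystem u a f C R) (hR : 0 < R)
    (hu : ∀ r ∈ Set.Ioo 0 R, u r ≠ 0) {L : ℝ} (hL : ∀ r ∈ Set.Ioo 0 R, ‖u r‖ ≤ L * r) :
    ∃ ν : ℝ, 1 ≤ ν ∧ Tendsto (frequency u a) (nhdsWithin 0 (Set.Ioi 0)) (nhds ν) := by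
  have hmono := h.monotoneOn_frequency_add (convex_Ioo 0 R) le_rfl hu
  have hlower : ∀ x ∈ (fun r => frequency u a r + C ^ 2 * r ^ 2 / 2) '' Set.Ioo 0 R, 1 ≤ x := by
    rintro _ ⟨r, hr, rfl⟩
    exact h.one_le_frequency_add hu hL hr
  have hlim := hmono.tendsto_nhdsWithin_Ioo_right (Set.nonempty_Ioo.2 hR) ⟨1, hlower⟩
  have hquad : Tendsto (fun r : ℝ => C ^ 2 * r ^ 2 / 2) (nhdsWithin 0 (Set.Ioi 0)) (nhds 0) :=
    tendsto_nhdsWithin_of_tendsto_nhds <| Continuous.tendsto' (by fun_prop) _ _ (by simp)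
  exact ⟨_, le_csInf ((Set.nonempty_Ioo.2 hR).image _) hlower, by simpa using hlim.sub hquad⟩

lemma frequency_sub_mul_norm_le (h : IsFrequencySystem u a f C R) {r : ℝ}
    (hr : r ∈ Set.Ioo 0 R) : (frequency u a r - C * r) * ‖u r‖ ≤ ‖a r + f r‖ := by
  rcases eq_or_ne (u r) 0 with hu | hu
  · simp [hu]
  refine le_of_mul_le_mul_left ?_ (norm_pos_iff.2 hu)
  have hf : -(‖u r‖ * (C * r * ‖u r‖)) ≤ inner ℝ (u r) (f r) := by
    refine (neg_le_neg ?_).trans (neg_le_of_abs_le (abs_real_inner_le_norm _ _))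
    gcongr
    exact h.norm_le r hr
  calc ‖u r‖ * ((frequency u a r - C * r) * ‖u r‖)
      = inner ℝ (u r) (a r) + -(‖u r‖ * (C * r * ‖u r‖)) := by rw [inner_eq_frequency_mul]; ring
    _ ≤ inner ℝ (u r) (a r + f r) := by rw [inner_add_right]; gcongr
    _ ≤ ‖u r‖ * ‖a r + f r‖ := real_inner_le_norm _ _

lemma exists_norm_sub_frequency_smul_sq_le (h : IsFrequencySystem u a f C R) {r q δ : ℝ}
    (hr : 0 < r) (hrR : 3 * r < R) (hu : ∀ s ∈ Set.Icc (2 * r) (3 * r), u s ≠ 0)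
    (hpinch : ∀ s ∈ Set.Icc (2 * r) (3 * r), |frequency u a s - q| ≤ δ) :
    ∃ s ∈ Set.Ioo (2 * r) (3 * r), ‖a s - frequency u a s • u s‖ ^ 2 ≤
      (6 * δ + 9 * C ^ 2 * r ^ 2) * ‖u s‖ ^ 2 := by
  have hlt : 2 * r < 3 * r := by linarith
  have hderiv : ∀ s ∈ Set.Icc (2 * r) (3 * r), ∃ d, HasDerivAt (frequency u a) d s ∧
      ‖a s - frequency u a s • u s‖ ^ 2 ≤ (s * d + C ^ 2 * s ^ 2) * ‖u s‖ ^ 2 := fun s hs =>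
    h.exists_hasDerivAt_frequency ⟨by linarith [hs.1], by linarith [hs.2]⟩ (hu s hs)
  choose! d hd hd' using hderiv
  obtain ⟨s, hs, hsd⟩ := exists_hasDerivAt_eq_slope (frequency u a) d hlt
    (fun s hs => (hd s hs).continuousAt.continuousWithinAt)
    fun s hs => hd s (Set.Ioo_subset_Icc_self hs)
  refine ⟨s, hs, (hd' s (Set.Ioo_subset_Icc_self hs)).trans ?_⟩
  have hspos : 0 < s := by linarith [hs.1]
  have hosc : frequency u a (3 * r) - frequency u a (2 * r) ≤ 2 * δ := by
    linarith [(abs_le.1 (hpinch _ (Set.left_mem_Icc.2 hlt.le))).1,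
      (abs_le.1 (hpinch _ (Set.right_mem_Icc.2 hlt.le))).2]
  have hδ : 0 ≤ δ := (abs_nonneg _).trans (hpinch _ (Set.left_mem_Icc.2 hlt.le))
  have hslope : s * d s ≤ 6 * δ := by
    rw [hsd, show 3 * r - 2 * r = r by ring, mul_div_assoc', div_le_iff₀ hr]
    calc s * (frequency u a (3 * r) - frequency u a (2 * r)) ≤ s * (2 * δ) := by gcongr
      _ ≤ 3 * r * (2 * δ) := by gcongr; exact hs.2.le
      _ = 6 * δ * r := by ring
  have hsq : C ^ 2 * s ^ 2 ≤ 9 * C ^ 2 * r ^ 2 := by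
    calc C ^ 2 * s ^ 2 ≤ C ^ 2 * (3 * r) ^ 2 := by gcongr; exact hs.2.le
      _ = 9 * C ^ 2 * r ^ 2 := by ring
  gcongr

lemma exists_norm_sub_smul_sq_le (h : IsFrequencySystem u a f C R) {r q δ : ℝ} (hr : 0 < r)
    (hrR : 3 * r < R) (hu : ∀ s ∈ Set.Icc (2 * r) (3 * r), u s ≠ 0)
    (hpinch : ∀ s ∈ Set.Icc (2 * r) (3 * r), |frequency u a s - q| ≤ δ) :
    ∃ s ∈ Set.Ioo (2 * r) (3 * r),
      ‖a s + f s - q • u s‖ ^ 2 ≤ pinchingError C δ r * ‖u s‖ ^ 2 := by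
  obtain ⟨s, hs, hosc⟩ := h.exists_norm_sub_frequency_smul_sq_le hr hrR hu hpinch
  refine ⟨s, hs, ?_⟩
  have hsR : s ∈ Set.Ioo 0 R := ⟨by linarith [hs.1], by linarith [hs.2]⟩
  have hspos := hsR.1
  have hdrift : ‖(frequency u a s - q) • u s‖ ^ 2 ≤ δ ^ 2 * ‖u s‖ ^ 2 := by
    rw [norm_smul, mul_pow, Real.norm_eq_abs]
    gcongr
    exact hpinch s (Set.Ioo_subset_Icc_self hs)
  have herror : ‖f s‖ ^ 2 ≤ 9 * C ^ 2 * r ^ 2 * ‖u s‖ ^ 2 := by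
    calc ‖f s‖ ^ 2 ≤ C ^ 2 * s ^ 2 * ‖u s‖ ^ 2 := h.norm_sq_le hsR
      _ ≤ C ^ 2 * (3 * r) ^ 2 * ‖u s‖ ^ 2 := by gcongr; exact hs.2.le
      _ = 9 * C ^ 2 * r ^ 2 * ‖u s‖ ^ 2 := by ring
  set x := a s - frequency u a s • u s
  set y := (frequency u a s - q) • u s
  calc ‖a s + f s - q • u s‖ ^ 2 = ‖x + y + f s‖ ^ 2 := by
        congr 2
        simp only [x, y, sub_smul]
        abel
    _ ≤ (‖x‖ + ‖y‖ + ‖f s‖) ^ 2 := by gcongr; exact norm_add₃_le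
    _ ≤ 3 * (‖x‖ ^ 2 + ‖y‖ ^ 2 + ‖f s‖ ^ 2) := by
        linarith [sq_nonneg (‖x‖ - ‖y‖), sq_nonneg (‖y‖ - ‖f s‖), sq_nonneg (‖x‖ - ‖f s‖)]
    _ ≤ pinchingError C δ r * ‖u s‖ ^ 2 := by rw [pinchingError]; linarith

end IsFrequencySystem

end Frequency

section UnitBall

variable {V E : Type*} [NormedAddCommGroup V] [InnerProductSpace ℝ V] [FiniteDimensional ℝ V]
  [MeasurableSpace V] [BorelSpace V] [NormedAddCommGroup E] [InnerProductSpace ℝ E]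

variable (V) in
/-- Lebesgue measure on the closed unit ball, regarded as a (compact) type so that continuous
functions on it embed into `L²`. -/
def unitBallMeasure : Measure (closedBall (0 : V) 1) := Measure.comap Subtype.val volume

instance : IsFiniteMeasure (unitBallMeasure V) where
  measure_univ_lt_top := by
    rw [unitBallMeasure, comap_subtype_coe_apply measurableSet_closedBall, Set.image_univ,
      Subtype.range_coe]
    exact measure_closedBall_lt_top

variable (V E) in
/-- The Hilbert space `L²(B₁, E)` over the closed unit ball of `V`. -/
abbrev BallL2 : Type _ := Lp E 2 (unitBallMeasure V)

/-- The class in `L²(B₁, E)` of a continuous function defined on all of `V`. -/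
def ballL2 : C(V, E) →L[ℝ] BallL2 V E :=
  ContinuousMap.toLp 2 (unitBallMeasure V) ℝ ∘L
    ContinuousMap.compCLM ℝ E (.restrict (closedBall (0 : V) 1) (.id V))

lemma coeFn_ballL2 (F : C(V, E)) : ballL2 F =ᵐ[unitBallMeasure V] fun z => F z :=
  ContinuousMap.coeFn_toLp (unitBallMeasure V) (𝕜 := ℝ) (F.restrict (closedBall (0 : V) 1))

lemma inner_ballL2 (F G : C(V, E)) :
    inner ℝ (ballL2 F) (ballL2 G) = ∫ z in closedBall (0 : V) 1, inner ℝ (F z) (G z) := by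
  rw [L2.inner_def, ← integral_subtype_comap measurableSet_closedBall]
  refine integral_congr_ae ?_
  filter_upwards [coeFn_ballL2 F, coeFn_ballL2 G] with z hF hG
  rw [hF, hG]

lemma norm_ballL2_sq (F : C(V, E)) :
    ‖ballL2 F‖ ^ 2 = ∫ z in closedBall (0 : V) 1, ‖F z‖ ^ 2 := by
  simp only [← real_inner_self_eq_norm_sq, inner_ballL2]

lemma norm_ballL2_le_mul {E' : Type*} [NormedAddCommGroup E'] [InnerProductSpace ℝ E']
    {F : C(V, E)} {G : C(V, E')} {c : ℝ}
    (h : ∀ z ∈ closedBall (0 : V) 1, ‖F z‖ ≤ c * ‖G z‖) : ‖ballL2 F‖ ≤ c * ‖ballL2 G‖ := by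
  apply Lp.norm_le_mul_norm_of_ae_le_mul
  filter_upwards [coeFn_ballL2 F, coeFn_ballL2 G] with z hF hG
  rw [hF, hG]
  exact h z z.2

lemma ballL2_congr {F G : C(V, E)} (h : Set.EqOn F G (closedBall 0 1)) :
    ballL2 F = ballL2 G := by
  have hle := norm_ballL2_le_mul (F := F - G) (G := (0 : C(V, E))) (c := 0)
    fun z hz => by simp [h hz]
  rwa [zero_mul, norm_le_zero_iff, map_sub, sub_eq_zero] at hle

lemma ballL2_eq_zero_iff {F : C(V, E)} : ballL2 F = 0 ↔ Set.EqOn F 0 (closedBall 0 1) := by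
  refine ⟨fun h => ?_, fun h => (ballL2_congr (G := 0) h).trans (map_zero _)⟩
  have hnull : ∫ z in closedBall (0 : V) 1, ‖F z‖ ^ 2 = 0 := by
    rw [← norm_ballL2_sq, h, norm_zero, zero_pow two_ne_zero]
  have hcont : Continuous fun z => ‖F z‖ ^ 2 := by fun_prop
  rw [setIntegral_eq_zero_iff_of_nonneg_ae (.of_forall fun z => by positivity)
    (hcont.continuousOn.integrableOn_compact (isCompact_closedBall 0 1))] at hnull
  have heq := Measure.eqOn_of_ae_eq hnull hcont.continuousOn continuousOn_const
    (by rw [interior_closedBall 0 one_ne_zero, closure_ball 0 one_ne_zero])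
  exact fun z hz => by simpa using heq hz

lemma hasDerivAt_of_hasDerivAt_apply {K : Type*} [TopologicalSpace K] [CompactSpace K]
    [CompleteSpace E] {F F' : ℝ → C(K, E)} (hF' : Continuous F')
    (h : ∀ z s, HasDerivAt (fun s => F s z) (F' s z) s) (s₀ : ℝ) :
    HasDerivAt F (F' s₀) s₀ := by
  have hintegral : F = fun s => F s₀ + ∫ t in s₀..s, F' t := by
    ext s z
    have heval : (∫ t in s₀..s, F' t) z = ∫ t in s₀..s, F' t z :=
      ((ContinuousMap.evalCLM ℝ z : C(K, E) →L[ℝ] E).intervalIntegral_comp_comm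
        (hF'.intervalIntegrable s₀ s)).symm
    have hftc : ∫ t in s₀..s, F' t z = F s z - F s₀ z :=
      intervalIntegral.integral_eq_sub_of_hasDerivAt (fun t _ => h z t)
        (((continuous_eval_const z).comp hF').intervalIntegrable _ _)
    simp [heval, hftc]
  rw [hintegral]
  simpa using (intervalIntegral.integral_hasDerivAt_right (hF'.intervalIntegrable s₀ s₀)
    (hF'.stronglyMeasurableAtFilter _ _) hF'.continuousAt).const_add (F s₀)

lemma hasDerivAt_ballL2 [CompleteSpace E] {F F' : ℝ → C(V, E)} (hF' : Continuous F')
    (h : ∀ z s, HasDerivAt (fun s => F s z) (F' s z) s) (s₀ : ℝ) :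
    HasDerivAt (fun s => ballL2 (F s)) (ballL2 (F' s₀)) s₀ := by
  have hrestrict := hasDerivAt_of_hasDerivAt_apply
    (F := fun s => (F s).restrict (closedBall (0 : V) 1))
    ((ContinuousMap.continuous_restrict _).comp hF') (fun z => h z) s₀
  exact (ContinuousMap.toLp 2 (unitBallMeasure V) ℝ).hasFDerivAt.comp_hasDerivAt s₀ hrestrict

lemma setIntegral_closedBall_comp_unitary {U : V →L[ℝ] V} (hU : U ∈ unitary (V →L[ℝ] V))
    (φ : V → ℝ) :
    ∫ z in closedBall (0 : V) 1, φ (U z) = ∫ z in closedBall (0 : V) 1, φ z := by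
  let e : V ≃ₗᵢ[ℝ] V := Unitary.linearIsometryEquiv ⟨U, hU⟩
  have := e.measurePreserving.setIntegral_preimage_emb
    e.toHomeomorph.measurableEmbedding φ (closedBall 0 1)
  rwa [e.preimage_closedBall, map_zero] at this

/-- Differentiate the integral of `φ` over the rotated ball along `θ ↦ exp (θ S)`. -/
lemma setIntegral_fderiv_apply_skewAdjoint {S : V →L[ℝ] V}
    (hS : S ∈ skewAdjoint (V →L[ℝ] V)) {φ : V → ℝ} (hφ : ContDiff ℝ 1 φ) :
    ∫ z in closedBall (0 : V) 1, fderiv ℝ φ z (S z) = 0 := by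
  let U (θ : ℝ) : V →L[ℝ] V := NormedSpace.exp (θ • S)
  have hU (θ : ℝ) : U θ ∈ unitary (V →L[ℝ] V) := by
    let := NormedAlgebra.restrictScalars ℚ ℝ (V →L[ℝ] V)
    exact NormedSpace.exp_mem_unitary_of_mem_skewAdjoint (skewAdjoint.smul_mem θ hS)
  have hU' (θ : ℝ) : HasDerivAt U (U θ * S) θ := hasDerivAt_exp_smul_const S θ
  have hUcont : Continuous U := continuous_iff_continuousAt.2 fun θ => (hU' θ).continuousAt
  have hφ' : Continuous (fderiv ℝ φ) := hφ.continuous_fderiv one_ne_zero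
  let Φ (θ : ℝ) : C(V, ℝ) := ⟨fun z => φ (U θ z), by fun_prop⟩
  let Φ' (θ : ℝ) : C(V, ℝ) := ⟨fun z => fderiv ℝ φ (U θ z) (U θ (S z)), by fun_prop⟩
  have hΦ' : Continuous Φ' :=
    ContinuousMap.continuous_of_continuous_uncurry _ (by
      simp only [Function.uncurry_def, Φ', ContinuousMap.coe_mk]
      fun_prop)
  have hΦ (z : V) (θ : ℝ) : HasDerivAt (fun θ => Φ θ z) (Φ' θ z) θ :=
    ((hφ.differentiable one_ne_zero) (U θ z)).hasFDerivAt.comp_hasDerivAt θ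
      ((hU' θ).clm_apply (hasDerivAt_const θ z) |>.congr_deriv (by simp))
  have hderiv := (innerSL ℝ (ballL2 (1 : C(V, ℝ)))).hasFDerivAt.comp_hasDerivAt 0
    (hasDerivAt_ballL2 hΦ' hΦ 0)
  have hconst : (innerSL ℝ (ballL2 (1 : C(V, ℝ)))) ∘ (fun θ => ballL2 (Φ θ))
      = fun _ => ∫ z in closedBall (0 : V) 1, φ z := by
    ext θ
    simpa [inner_ballL2, Φ] using setIntegral_closedBall_comp_unitary (hU θ) φ
  rw [hconst] at hderiv
  have hzero := (hderiv.unique (hasDerivAt_const 0 _))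
  simpa [inner_ballL2, Φ', U] using hzero

end UnitBall

section CliffordMul

variable {V E : Type*} [NormedAddCommGroup V] [InnerProductSpace ℝ V]
  [NormedAddCommGroup E] [InnerProductSpace ℝ E] {c : V →L[ℝ] E →L[ℝ] E}

/-- A Clifford multiplication of `V` on `E`: vectors act by skew-adjoint operators
with `c v ∘ c v = -‖v‖²`. -/
structure IsCliffordMul (c : V →L[ℝ] E →L[ℝ] E) : Prop where
  inner_apply_left : ∀ v x y, inner ℝ (c v x) y = -inner ℝ x (c v y)
  apply_apply_self : ∀ v x, c v (c v x) = -(‖v‖ ^ 2 • x)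

/-- The action `c v c w + ⟪v, w⟫` of the bivector `v ∧ w` on `E`. -/
def bivectorMul (c : V →L[ℝ] E →L[ℝ] E) (v w : V) : E →L[ℝ] E :=
  c v ∘L c w + inner ℝ v w • .id ℝ E

lemma bivectorMul_apply (v w : V) (x : E) :
    bivectorMul c v w x = c v (c w x) + inner ℝ v w • x := rfl

/-- The infinitesimal rotation `z ↦ ⟪v, z⟫ w - ⟪w, z⟫ v` in the plane of `v` and `w`. -/
def wedge (v w : V) : V →L[ℝ] V :=
  (innerSL ℝ v).smulRight w - (innerSL ℝ w).smulRight v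

lemma wedge_apply (v w z : V) : wedge v w z = inner ℝ v z • w - inner ℝ w z • v := rfl

lemma wedge_mem_skewAdjoint [CompleteSpace V] (v w : V) :
    wedge v w ∈ skewAdjoint (V →L[ℝ] V) := by
  rw [skewAdjoint.mem_iff, ContinuousLinearMap.star_eq_adjoint, eq_comm,
    ContinuousLinearMap.eq_adjoint_iff]
  intro x y
  simp only [_root_.neg_apply, wedge_apply, inner_neg_left, inner_sub_left,
    inner_sub_right, real_inner_smul_left, real_inner_smul_right]
  rw [real_inner_comm x v, real_inner_comm x w]
  ring

namespace IsCliffordMul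

lemma norm_apply (hc : IsCliffordMul c) (v : V) (x : E) : ‖c v x‖ = ‖v‖ * ‖x‖ := by
  rw [← sq_eq_sq₀ (norm_nonneg _) (by positivity), ← real_inner_self_eq_norm_sq,
    hc.inner_apply_left, hc.apply_apply_self, inner_neg_right, real_inner_smul_right,
    real_inner_self_eq_norm_sq]
  ring

lemma apply_apply_add_swap (hc : IsCliffordMul c) (v w : V) (x : E) :
    c v (c w x) + c w (c v x) = -((2 * inner ℝ v w) • x) := by
  have h := hc.apply_apply_self (v + w) x
  simp only [map_add, _root_.add_apply, hc.apply_apply_self, norm_add_sq_real] at h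
  linear_combination (norm := module) h

lemma bivectorMul_swap (hc : IsCliffordMul c) (v w : V) :
    bivectorMul c w v = -bivectorMul c v w := by
  ext x
  rw [_root_.neg_apply, bivectorMul_apply, bivectorMul_apply, real_inner_comm]
  linear_combination (norm := module) hc.apply_apply_add_swap v w x

lemma inner_bivectorMul_left (hc : IsCliffordMul c) (v w : V) (x y : E) :
    inner ℝ (bivectorMul c v w x) y = -inner ℝ x (bivectorMul c v w y) := by
  rw [← inner_neg_right, ← _root_.neg_apply, ← hc.bivectorMul_swap]
  simp only [bivectorMul_apply, inner_add_left, inner_add_right, hc.inner_apply_left,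
    real_inner_smul_left, real_inner_smul_right, real_inner_comm v w, neg_neg]

end IsCliffordMul

lemma norm_apply_le_norm_mul_sum {ι : Type*} [Fintype ι] (b : OrthonormalBasis ι ℝ V)
    (A : V →L[ℝ] E) (z : V) :
    ‖A z‖ ≤ ‖z‖ * ∑ i, ‖A (b i)‖ := by
  calc ‖A z‖ = ‖∑ i, inner ℝ (b i) z • A (b i)‖ := by
        simp only [← map_smul, ← map_sum, b.sum_repr']
    _ ≤ ∑ i, ‖inner ℝ (b i) z • A (b i)‖ := norm_sum_le _ _
    _ ≤ ∑ i, ‖z‖ * ‖A (b i)‖ := by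
        gcongr with i
        rw [norm_smul]
        gcongr
        simpa using norm_inner_le_norm (𝕜 := ℝ) (b i) z
    _ = ‖z‖ * ∑ i, ‖A (b i)‖ := (Finset.mul_sum _ _ _).symm

section Dirac

variable [FiniteDimensional ℝ V] {ι : Type*} [Fintype ι]

/-- The Dirac symbol `A ↦ ∑ᵢ c eᵢ (A eᵢ)`, so that `diracTrace c (fderiv ℝ ψ x)` is `Dψ(x)`. -/
def diracTrace (c : V →L[ℝ] E →L[ℝ] E) : (V →L[ℝ] E) →L[ℝ] E :=
  ∑ i, c (stdOrthonormalBasis ℝ V i) ∘L .apply ℝ E (stdOrthonormalBasis ℝ V i)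

lemma diracTrace_eq_sum (b : OrthonormalBasis ι ℝ V) (A : V →L[ℝ] E) :
    diracTrace c A = ∑ j, c (b j) (A (b j)) := by
  let e := stdOrthonormalBasis ℝ V
  calc diracTrace c A = ∑ i, ∑ j, inner ℝ (b j) (e i) • c (e i) (A (b j)) := by
        simp only [diracTrace, _root_.sum_apply, ContinuousLinearMap.comp_apply,
          ContinuousLinearMap.apply_apply]
        refine Finset.sum_congr rfl fun i _ => ?_
        nth_rw 2 [← b.sum_repr' (stdOrthonormalBasis ℝ V i)]
        simp only [map_sum, map_smul, e]
    _ = ∑ j, c (b j) (A (b j)) := by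
        rw [Finset.sum_comm]
        refine Finset.sum_congr rfl fun j _ => ?_
        nth_rw 3 [← e.sum_repr' (b j)]
        simp only [map_sum, map_smul, _root_.sum_apply,
          _root_.smul_apply, real_inner_comm]

lemma IsCliffordMul.norm_apply_le_norm_diracTrace_add_sum [DecidableEq ι] (hc : IsCliffordMul c)
    (b : OrthonormalBasis ι ℝ V) (A : V →L[ℝ] E) (i₀ : ι) :
    ‖A (b i₀)‖ ≤ ‖diracTrace c A‖ + ∑ i ∈ Finset.univ.erase i₀, ‖A (b i)‖ := by
  have hnorm (i : ι) : ‖c (b i) (A (b i))‖ = ‖A (b i)‖ := by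
    rw [hc.norm_apply, b.norm_eq_one, one_mul]
  calc ‖A (b i₀)‖ = ‖diracTrace c A - ∑ i ∈ Finset.univ.erase i₀, c (b i) (A (b i))‖ := by
        rw [diracTrace_eq_sum b, ← Finset.add_sum_erase _ _ (Finset.mem_univ i₀),
          add_sub_cancel_right, hnorm]
    _ ≤ ‖diracTrace c A‖ + ∑ i ∈ Finset.univ.erase i₀, ‖c (b i) (A (b i))‖ :=
        (norm_sub_le _ _).trans (by gcongr; exact norm_sum_le _ _)
    _ = ‖diracTrace c A‖ + ∑ i ∈ Finset.univ.erase i₀, ‖A (b i)‖ := by simp only [hnorm]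

/-- The spherical Dirac operator `A z + c z (D A)`: for a solution of `Dψ = 0` it is the Euler
derivative `A z`, yet by `IsCliffordMul.sphericalOp_eq_sum` it involves only angular derivatives. -/
def sphericalOp (c : V →L[ℝ] E →L[ℝ] E) (A : V →L[ℝ] E) (z : V) : E :=
  A z + c z (diracTrace c A)

lemma IsCliffordMul.sphericalOp_eq_sum (hc : IsCliffordMul c) (b : OrthonormalBasis ι ℝ V)
    (A : V →L[ℝ] E) (z : V) :
    sphericalOp c A z =
      (1 / 2 : ℝ) • ∑ j, ∑ k, bivectorMul c (b j) (b k) (A (wedge (b j) (b k) z)) := by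
  have hsum : ∑ j, ∑ k, inner ℝ (b j) z • bivectorMul c (b j) (b k) (A (b k))
      = sphericalOp c A z := by
    have hz : ∑ j, inner ℝ (b j) z • b j = z := b.sum_repr' z
    have hA : A z = ∑ k, inner ℝ (b k) z • A (b k) := by
      simp only [← map_smul, ← map_sum, hz]
    calc _ = ∑ k, bivectorMul c (∑ j, inner ℝ (b j) z • b j) (b k) (A (b k)) := by
          rw [Finset.sum_comm]
          simp only [bivectorMul_apply, map_sum, map_smul, _root_.sum_apply, _root_.smul_apply,
            sum_inner, real_inner_smul_left, Finset.sum_smul, mul_smul, smul_add,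
            Finset.sum_add_distrib]
      _ = c z (∑ k, c (b k) (A (b k))) + A z := by
          rw [hz, hA]
          simp only [bivectorMul_apply, Finset.sum_add_distrib, map_sum, real_inner_comm z]
      _ = sphericalOp c A z := by
          rw [← diracTrace_eq_sum b, add_comm, sphericalOp]
  have hswap : ∑ j, ∑ k, inner ℝ (b k) z • bivectorMul c (b j) (b k) (A (b j))
      = -sphericalOp c A z := by
    rw [Finset.sum_comm, ← hsum, ← Finset.sum_neg_distrib]
    refine Finset.sum_congr rfl fun j _ => ?_
    rw [← Finset.sum_neg_distrib]
    exact Finset.sum_congr rfl fun k _ => by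
      rw [hc.bivectorMul_swap (b j), _root_.neg_apply, smul_neg]
  simp only [wedge_apply, map_sub, map_smul, Finset.sum_sub_distrib, hsum, hswap]
  module

lemma continuous_sphericalOp {A : V → V →L[ℝ] E} (hA : Continuous A) :
    Continuous fun z => sphericalOp c (A z) z := by
  unfold sphericalOp
  fun_prop

lemma IsCliffordMul.inner_sphericalOp_sub (hc : IsCliffordMul c) (b : OrthonormalBasis ι ℝ V)
    {f g : V → E} (hf : ContDiff ℝ 1 f) (hg : ContDiff ℝ 1 g) (z : V) :
    inner ℝ (sphericalOp c (fderiv ℝ f z) z) (g z)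
        - inner ℝ (f z) (sphericalOp c (fderiv ℝ g z) z)
      = -(1 / 2) * ∑ j, ∑ k, fderiv ℝ (fun y => inner ℝ (f y) (bivectorMul c (b j) (b k) (g y))) z
        (wedge (b j) (b k) z) := by
  rw [hc.sphericalOp_eq_sum b, hc.sphericalOp_eq_sum b]
  simp only [real_inner_smul_left, real_inner_smul_right, sum_inner, inner_sum, ← mul_sub,
    ← Finset.sum_sub_distrib, neg_mul, ← mul_neg, ← Finset.sum_neg_distrib]
  congr! 3 with j _ k _
  have hdf := hf.differentiable one_ne_zero z
  have hdg := (bivectorMul c (b j) (b k)).hasFDerivAt.comp z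
    (hg.differentiable one_ne_zero z).hasFDerivAt
  rw [Function.comp_def] at hdg
  rw [fderiv_inner_apply ℝ hdf hdg.differentiableAt, hdg.fderiv, hc.inner_bivectorMul_left,
    ContinuousLinearMap.comp_apply]
  ring

variable [MeasurableSpace V] [BorelSpace V]

lemma IsCliffordMul.setIntegral_inner_sphericalOp (hc : IsCliffordMul c) {f g : V → E}
    (hf : ContDiff ℝ 1 f) (hg : ContDiff ℝ 1 g) :
    ∫ z in closedBall (0 : V) 1, inner ℝ (sphericalOp c (fderiv ℝ f z) z) (g z)
      = ∫ z in closedBall (0 : V) 1, inner ℝ (f z) (sphericalOp c (fderiv ℝ g z) z) := by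
  have hintegrable {F : V → ℝ} (hF : Continuous F) : IntegrableOn F (closedBall (0 : V) 1) :=
    hF.continuousOn.integrableOn_compact (isCompact_closedBall _ _)
  have hcontf := continuous_sphericalOp (c := c) (hf.continuous_fderiv one_ne_zero)
  have hcontg := continuous_sphericalOp (c := c) (hg.continuous_fderiv one_ne_zero)
  let b := stdOrthonormalBasis ℝ V
  have hφ (j k) : ContDiff ℝ 1 fun y => inner ℝ (f y) (bivectorMul c (b j) (b k) (g y)) :=
    hf.inner ℝ ((bivectorMul c (b j) (b k)).contDiff.comp hg)
  have hφ' (j k) : Continuous fun z =>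
      fderiv ℝ (fun y => inner ℝ (f y) (bivectorMul c (b j) (b k) (g y))) z
        (wedge (b j) (b k) z) :=
    ((hφ j k).continuous_fderiv one_ne_zero).clm_apply (wedge (b j) (b k)).continuous
  rw [← sub_eq_zero, ← integral_sub (hintegrable (hcontf.inner hg.continuous))
    (hintegrable (hf.continuous.inner hcontg))]
  simp only [hc.inner_sphericalOp_sub b hf hg, integral_const_mul]
  rw [integral_finsetSum _ fun j _ => hintegrable (continuous_finsetSum _ fun k _ => hφ' j k)]
  simp only [integral_finsetSum _ fun k _ => hintegrable (hφ' _ k),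
    setIntegral_fderiv_apply_skewAdjoint (wedge_mem_skewAdjoint _ _) (hφ _ _),
    Finset.sum_const_zero, mul_zero]

end Dirac

end CliffordMul

section Blowup

variable {V E : Type*} [NormedAddCommGroup V] [InnerProductSpace ℝ V]
  [NormedAddCommGroup E] [InnerProductSpace ℝ E] {ψ : C(V, E)}

/-- The affine map `z ↦ p + r • z` from the unit ball to the ball of centre `p` and radius `r`. -/
def rescaling (p : V) (r : ℝ) : C(V, V) := ⟨fun z => p + r • z, by fun_prop⟩

lemma rescaling_apply (p : V) (r : ℝ) (z : V) : rescaling p r z = p + r • z := rfl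

lemma rescaling_mem_closedBall (p : V) {r : ℝ} (hr : 0 ≤ r) {z : V}
    (hz : z ∈ closedBall (0 : V) 1) : rescaling p r z ∈ closedBall p r := by
  rw [rescaling_apply, mem_closedBall, dist_self_add_left, norm_smul, Real.norm_of_nonneg hr]
  exact mul_le_of_le_one_right hr (mem_closedBall_zero_iff.1 hz)

/-- The derivative of `ψ` in the fixed direction `v`, as a linear function of `v`. -/
def dirDeriv (hψ : ContDiff ℝ 1 ψ) : V →ₗ[ℝ] C(V, E) where
  toFun v :=
    ⟨fun x => fderiv ℝ ψ x v, (hψ.continuous_fderiv one_ne_zero).clm_apply continuous_const⟩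
  map_add' v w := by
    ext x
    exact map_add (fderiv ℝ ψ x) v w
  map_smul' t v := by
    ext x
    exact map_smul (fderiv ℝ ψ x) t v

/-- The Euler derivative of `ψ` with respect to the centre `p`. -/
def radialDeriv (hψ : ContDiff ℝ 1 ψ) (p : V) : C(V, E) :=
  ⟨fun x => fderiv ℝ ψ x (x - p),
    (hψ.continuous_fderiv one_ne_zero).clm_apply (continuous_id.sub continuous_const)⟩

lemma dirDeriv_apply (hψ : ContDiff ℝ 1 ψ) (v x : V) : dirDeriv hψ v x = fderiv ℝ ψ x v := rfl

lemma radialDeriv_apply (hψ : ContDiff ℝ 1 ψ) (p x : V) :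
    radialDeriv hψ p x = fderiv ℝ ψ x (x - p) := rfl

lemma dirDeriv_sub (hψ : ContDiff ℝ 1 ψ) (x y : V) :
    dirDeriv hψ (y - x) = radialDeriv hψ x - radialDeriv hψ y := by
  ext z
  rw [ContinuousMap.sub_apply, dirDeriv_apply, radialDeriv_apply, radialDeriv_apply, ← map_sub,
    sub_sub_sub_cancel_left]

lemma fderiv_comp_rescaling (hψ : ContDiff ℝ 1 ψ) (p : V) (r : ℝ) (z : V) :
    fderiv ℝ (ψ.comp (rescaling p r)) z = r • fderiv ℝ ψ (rescaling p r z) := by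
  have haffine : HasFDerivAt (rescaling p r) (r • ContinuousLinearMap.id ℝ V) z :=
    ((hasFDerivAt_id z).const_smul r).const_add p
  rw [ContinuousMap.coe_comp,
    ((hψ.differentiable one_ne_zero _).hasFDerivAt.comp z haffine).fderiv]
  ext v
  simp

variable [FiniteDimensional ℝ V]

/-- The spherical Dirac operator with centre `p` applied to `ψ`. -/
def sphericalDeriv (c : V →L[ℝ] E →L[ℝ] E) (hψ : ContDiff ℝ 1 ψ) (p : V) : C(V, E) :=
  ⟨fun x => sphericalOp c (fderiv ℝ ψ x) (x - p), by
    have := hψ.continuous_fderiv one_ne_zero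
    unfold sphericalOp
    fun_prop⟩

lemma sphericalDeriv_apply (c : V →L[ℝ] E →L[ℝ] E) (hψ : ContDiff ℝ 1 ψ) (p x : V) :
    sphericalDeriv c hψ p x = sphericalOp c (fderiv ℝ ψ x) (x - p) := rfl

lemma sphericalDeriv_rescaling (c : V →L[ℝ] E →L[ℝ] E) (hψ : ContDiff ℝ 1 ψ) (p : V) (r : ℝ)
    (z : V) : sphericalDeriv c hψ p (rescaling p r z)
      = sphericalOp c (fderiv ℝ (ψ.comp (rescaling p r)) z) z := by
  rw [fderiv_comp_rescaling hψ, sphericalDeriv_apply, rescaling_apply, add_sub_cancel_left]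
  simp [sphericalOp]

variable [MeasurableSpace V] [BorelSpace V]

/-- The restriction of `F` to the ball of centre `p` and radius `r`, rescaled to the unit ball. -/
def blowup (p : V) (r : ℝ) : C(V, E) →L[ℝ] BallL2 V E :=
  ballL2 ∘L ContinuousMap.compCLM ℝ E (rescaling p r)

lemma blowup_apply (p : V) (r : ℝ) (F : C(V, E)) :
    blowup p r F = ballL2 (F.comp (rescaling p r)) := rfl

lemma inner_blowup (p q : V) (r s : ℝ) (F G : C(V, E)) :
    inner ℝ (blowup p r F) (blowup q s G)
      = ∫ z in closedBall (0 : V) 1, inner ℝ (F (rescaling p r z)) (G (rescaling q s z)) :=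
  inner_ballL2 _ _

lemma norm_blowup_le_mul {E' : Type*} [NormedAddCommGroup E'] [InnerProductSpace ℝ E'] {p : V}
    {r : ℝ} (hr : 0 ≤ r) {F : C(V, E)} {G : C(V, E')} {c : ℝ}
    (h : ∀ x ∈ closedBall p r, ‖F x‖ ≤ c * ‖G x‖) : ‖blowup p r F‖ ≤ c * ‖blowup p r G‖ :=
  norm_ballL2_le_mul fun _ hz => h _ (rescaling_mem_closedBall p hr hz)

lemma norm_blowup_le_add_sum {ι : Type*} {s : Finset ι} {p : V} {r : ℝ} (hr : 0 ≤ r)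
    {F G₀ : C(V, E)} {G : ι → C(V, E)}
    (h : ∀ x ∈ closedBall p r, ‖F x‖ ≤ ‖G₀ x‖ + ∑ i ∈ s, ‖G i x‖) :
    ‖blowup p r F‖ ≤ ‖blowup p r G₀‖ + ∑ i ∈ s, ‖blowup p r (G i)‖ := by
  let abs (F : C(V, E)) : C(V, ℝ) := ⟨fun x => ‖F x‖, F.continuous.norm⟩
  have hnorm (F : C(V, E)) : ‖blowup p r (abs F)‖ ≤ ‖blowup p r F‖ := by
    rw [← one_mul ‖blowup p r F‖]
    exact norm_blowup_le_mul hr fun x _ => by simp [abs]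
  calc ‖blowup p r F‖ ≤ 1 * ‖blowup p r (abs G₀ + ∑ i ∈ s, abs (G i))‖ :=
        norm_blowup_le_mul hr fun x hx => by
          rw [one_mul, ContinuousMap.add_apply, ContinuousMap.sum_apply]
          exact (h x hx).trans (Real.le_norm_self _)
    _ ≤ ‖blowup p r (abs G₀)‖ + ∑ i ∈ s, ‖blowup p r (abs (G i))‖ := by
        rw [one_mul, map_add, map_sum]
        exact (norm_add_le _ _).trans (by gcongr; exact norm_sum_le _ _)
    _ ≤ ‖blowup p r G₀‖ + ∑ i ∈ s, ‖blowup p r (G i)‖ := by gcongr <;> exact hnorm _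

lemma exists_norm_blowup_le_mul (hψ : ContDiff ℝ 1 ψ) {p : V} (hp : ψ p = 0) (R : ℝ) :
    ∃ L, ∀ r ∈ Set.Ioo 0 R, ‖blowup p r ψ‖ ≤ L * r := by
  obtain ⟨L, hL⟩ := (isCompact_closedBall p R).exists_bound_of_continuousOn
    (hψ.continuous_fderiv one_ne_zero).continuousOn
  refine ⟨L * ‖ballL2 (ContinuousMap.const V (1 : ℝ))‖, fun r hr => ?_⟩
  have hpR : p ∈ closedBall p R := mem_closedBall_self (hr.1.trans hr.2).le
  have hL0 : 0 ≤ L := (norm_nonneg _).trans (hL p hpR)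
  have hbound : ∀ x ∈ closedBall p r, ‖ψ x‖ ≤ L * r * ‖ContinuousMap.const V (1 : ℝ) x‖ := by
    intro x hx
    have hlip := (convex_closedBall p R).norm_image_sub_le_of_norm_fderiv_le
      (fun y _ => hψ.differentiable one_ne_zero y) hL hpR (closedBall_subset_closedBall hr.2.le hx)
    rw [hp, sub_zero, ← dist_eq_norm] at hlip
    rw [ContinuousMap.const_apply, norm_one, mul_one]
    exact hlip.trans (by gcongr; exact hx)
  have hconst : blowup p r (ContinuousMap.const V (1 : ℝ)) = ballL2 (ContinuousMap.const V 1) := rfl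
  rw [mul_right_comm, ← hconst]
  exact norm_blowup_le_mul hr.1.le hbound

lemma blowup_eq_zero_iff {p : V} {r : ℝ} (hr : 0 < r) {F : C(V, E)} :
    blowup p r F = 0 ↔ Set.EqOn F 0 (closedBall p r) := by
  rw [blowup_apply, ballL2_eq_zero_iff]
  refine ⟨fun h x hx => ?_, fun h z hz => h (rescaling_mem_closedBall p hr.le hz)⟩
  have hz : r⁻¹ • (x - p) ∈ closedBall (0 : V) 1 := by
    rw [mem_closedBall_zero_iff, norm_smul, norm_inv, Real.norm_of_nonneg hr.le,
      inv_mul_le_one₀ hr, ← dist_eq_norm]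
    exact hx
  simpa [rescaling_apply, smul_inv_smul₀ hr.ne'] using h hz

lemma blowup_ne_zero_of_frequently {p : V} {F : C(V, E)} (hp : ∃ᶠ y in nhds p, F y ≠ 0) {r : ℝ}
    (hr : 0 < r) : blowup p r F ≠ 0 := fun h =>
  hp <| by
    filter_upwards [closedBall_mem_nhds p hr] with y hy
    exact not_not.2 ((blowup_eq_zero_iff hr).1 h hy)

lemma setIntegral_closedBall_eq_pow_mul (g : V → ℝ) (p : V) {r : ℝ} (hr : 0 < r) :
    ∫ x in closedBall p r, g x
      = r ^ Module.finrank ℝ V * ∫ z in closedBall (0 : V) 1, g (rescaling p r z) := by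
  have hscale := Measure.setIntegral_comp_smul_of_pos (volume : Measure V)
    (fun x => g (p + x)) (closedBall 0 1) hr
  have htranslate := (measurePreserving_add_left (volume : Measure V) p).setIntegral_preimage_emb
    (MeasurableEquiv.addLeft p).measurableEmbedding g (closedBall p r)
  rw [preimage_add_closedBall, sub_self] at htranslate
  rw [smul_unitClosedBall_of_nonneg hr.le, htranslate, smul_eq_mul,
    eq_inv_mul_iff_mul_eq₀ (by positivity)] at hscale
  exact hscale.symm

lemma pow_mul_norm_blowup_sq (p : V) {r : ℝ} (hr : 0 < r) (F : C(V, E)) :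
    r ^ Module.finrank ℝ V * ‖blowup p r F‖ ^ 2 = ∫ x in closedBall p r, ‖F x‖ ^ 2 := by
  rw [setIntegral_closedBall_eq_pow_mul _ p hr, blowup_apply, norm_ballL2_sq]
  rfl

lemma pow_mul_norm_blowup_sq_mono (F : C(V, E)) {p q : V} {r s : ℝ} (hr : 0 < r) (hs : 0 < s)
    (hsub : closedBall p r ⊆ closedBall q s) :
    r ^ Module.finrank ℝ V * ‖blowup p r F‖ ^ 2 ≤ s ^ Module.finrank ℝ V * ‖blowup q s F‖ ^ 2 := by
  rw [pow_mul_norm_blowup_sq p hr, pow_mul_norm_blowup_sq q hs]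
  exact setIntegral_mono_set
    ((F.continuous.norm.pow 2).continuousOn.integrableOn_compact (isCompact_closedBall _ _))
    (.of_forall fun x => by positivity) hsub.eventuallyLE

lemma continuous_blowup (p : V) (F : C(V, E)) : Continuous fun r => blowup p r F := by
  have hcomp : Continuous fun r => F.comp (rescaling p r) :=
    ContinuousMap.continuous_of_continuous_uncurry _ (by
      simp only [Function.uncurry_def, ContinuousMap.comp_apply, rescaling_apply]
      fun_prop)
  exact ballL2.continuous.comp hcomp

lemma hasDerivAt_blowup [CompleteSpace E] (hψ : ContDiff ℝ 1 ψ) (p : V) {r : ℝ} (hr : r ≠ 0) :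
    HasDerivAt (fun s => blowup p s ψ) (r⁻¹ • blowup p r (radialDeriv hψ p)) r := by
  have hcont := hψ.continuous_fderiv one_ne_zero
  let ψ' (s : ℝ) : C(V, E) := ⟨fun z => fderiv ℝ ψ (rescaling p s z) z, by fun_prop⟩
  have hψ' : Continuous ψ' := ContinuousMap.continuous_of_continuous_uncurry _ (by
    simp only [Function.uncurry_def, ψ', ContinuousMap.coe_mk, rescaling_apply]
    fun_prop)
  have hline (z : V) (s : ℝ) : HasDerivAt (fun s => rescaling p s z) z s := by
    simpa [rescaling_apply] using ((hasDerivAt_id s).smul_const z).const_add p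
  refine (hasDerivAt_ballL2 hψ' (fun z s => (hψ.differentiable one_ne_zero _).hasFDerivAt
    |>.comp_hasDerivAt s (hline z s)) r).congr_deriv ?_
  rw [blowup_apply, ← map_smul]
  congr 1
  ext z
  simp [ψ', radialDeriv_apply, rescaling_apply, inv_smul_smul₀ hr]

lemma IsCliffordMul.inner_blowup_sphericalDeriv {c : V →L[ℝ] E →L[ℝ] E} (hc : IsCliffordMul c)
    (hψ : ContDiff ℝ 1 ψ) (p : V) (r s : ℝ) :
    inner ℝ (blowup p s (sphericalDeriv c hψ p)) (blowup p r ψ)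
      = inner ℝ (blowup p s ψ) (blowup p r (sphericalDeriv c hψ p)) := by
  have hcomp (t : ℝ) : ContDiff ℝ 1 (ψ.comp (rescaling p t)) :=
    hψ.comp (contDiff_const.add (contDiff_id.const_smul t))
  rw [inner_blowup, inner_blowup]
  simp only [sphericalDeriv_rescaling]
  exact hc.setIntegral_inner_sphericalOp (hcomp s) (hcomp r)

end Blowup

section AlmostHarmonic

variable {V E : Type*} [NormedAddCommGroup V] [InnerProductSpace ℝ V] [FiniteDimensional ℝ V]
  [NormedAddCommGroup E] [InnerProductSpace ℝ E] {c : V →L[ℝ] E →L[ℝ] E} {ψ : C(V, E)} {C : ℝ}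
  {U : Set V}

/-- A `C¹` spinor field `ψ` with `‖Dψ‖ ≤ C ‖ψ‖` on `U`. -/
structure IsAlmostHarmonic (c : V →L[ℝ] E →L[ℝ] E) (ψ : C(V, E)) (C : ℝ) (U : Set V) : Prop where
  isCliffordMul : IsCliffordMul c
  contDiff : ContDiff ℝ 1 ψ
  norm_diracTrace_le : ∀ x ∈ U, ‖diracTrace c (fderiv ℝ ψ x)‖ ≤ C * ‖ψ x‖

lemma IsAlmostHarmonic.norm_diracTrace_le_norm_smul (h : IsAlmostHarmonic c ψ C U) {x : V}
    (hx : x ∈ U) : ‖diracTrace c (fderiv ℝ ψ x)‖ ≤ ‖(C • ψ) x‖ := by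
  refine (h.norm_diracTrace_le x hx).trans ?_
  rw [ContinuousMap.smul_apply, norm_smul]
  gcongr
  exact Real.le_norm_self C

/-- Bound for `‖∂_{y - x} ψ‖² / ‖ψ‖²` at scale `r` about `x` when the frequencies at `x` and `y`
are at most `K` and within `δ` of a common value. -/
def pinchingConst (d : ℕ) (C K δ r : ℝ) : ℝ :=
  4 ^ (d + 1) * 4 ^ (2 * K) * Real.exp (6 * C * r) * pinchingError C δ r

lemma pinchingConst_mono {d : ℕ} {K δ r s : ℝ} (hC : 0 ≤ C) (hδ : 0 ≤ δ) (hr : 0 ≤ r)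
    (hrs : r ≤ s) : pinchingConst d C K δ r ≤ pinchingConst d C K δ s := by
  unfold pinchingConst pinchingError
  gcongr

lemma exists_pinchingConst_le (d : ℕ) (C K : ℝ) {ε : ℝ} (hε : 0 < ε) :
    ∃ t > 0, C * t ≤ 1 / 8 ∧ pinchingConst d C K t t ≤ ε := by
  have hconst : Tendsto (fun t => pinchingConst d C K t t) (nhds 0) (nhds 0) :=
    Continuous.tendsto' (by unfold pinchingConst pinchingError; fun_prop) _ _
      (by simp [pinchingConst, pinchingError])
  have hlinear : Tendsto (fun t => C * t) (nhds 0) (nhds 0) :=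
    Continuous.tendsto' (by fun_prop) _ _ (mul_zero C)
  have hsmall : ∀ᶠ t in nhdsWithin 0 (Set.Ioi 0), C * t ≤ 1 / 8 ∧ pinchingConst d C K t t ≤ ε :=
    nhdsWithin_le_nhds <| (hlinear.eventually_le_const (by norm_num)).and
      (hconst.eventually_le_const hε)
  obtain ⟨t, ht, ht0⟩ := (hsmall.and self_mem_nhdsWithin).exists
  exact ⟨t, ht0, ht⟩

lemma exists_ne_le_of_le_add_sum {ι : Type*} [Fintype ι] [DecidableEq ι] [Nonempty ι]
    {w : ι → ℝ} {ε S : ℝ} (hS0 : ε < S) (hS : S ≤ ∑ i, w i)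
    (hw : ∀ i₀, w i₀ ≤ ε + ∑ i ∈ Finset.univ.erase i₀, w i) :
    ∃ i₁ i₂, i₁ ≠ i₂ ∧ (S - ε) / (2 * Fintype.card ι) ≤ w i₁ ∧
      (S - ε) / (2 * Fintype.card ι) ≤ w i₂ := by
  set t := (S - ε) / (2 * Fintype.card ι)
  have ht0 : 0 ≤ t := div_nonneg (sub_pos.2 hS0).le (by positivity)
  have ht : Fintype.card ι * t = (S - ε) / 2 := by
    simp only [t]
    field_simp
  obtain ⟨i₁, -, hmax⟩ := Finset.exists_max_image Finset.univ w Finset.univ_nonempty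
  have hsplit := Finset.add_sum_erase Finset.univ w (Finset.mem_univ i₁)
  have hrest : (S - ε) / 2 ≤ ∑ i ∈ Finset.univ.erase i₁, w i := by linarith [hw i₁]
  have hne : (Finset.univ.erase i₁).Nonempty := by
    by_contra! hempty
    rw [hempty, Finset.sum_empty] at hrest
    linarith
  have hsum : ∑ _i ∈ Finset.univ.erase i₁, t ≤ ∑ i ∈ Finset.univ.erase i₁, w i := by
    refine le_trans ?_ hrest
    rw [Finset.sum_const, nsmul_eq_mul, ← ht]
    gcongr
    exact Finset.card_le_univ _
  obtain ⟨i₂, hi₂, hle⟩ := Finset.exists_le_of_sum_le hne hsum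
  exact ⟨i₁, i₂, (Finset.ne_of_mem_erase hi₂).symm, hle.trans (hmax i₂ (Finset.mem_univ _)), hle⟩

/-- The eigenvectors of `Λ* Λ` are mapped to orthogonal vectors. -/
lemma exists_orthonormalBasis_abs_inner_mul_norm_le {H : Type*} [NormedAddCommGroup H]
    [InnerProductSpace ℝ H] [CompleteSpace H] (Λ : V →L[ℝ] H) :
    ∃ b : OrthonormalBasis (Fin (Module.finrank ℝ V)) ℝ V,
      ∀ i v, |inner ℝ (b i) v| * ‖Λ (b i)‖ ≤ ‖Λ v‖ := by
  let T := ContinuousLinearMap.adjoint Λ ∘L Λ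
  have hinner (x y : V) : inner ℝ (T x) y = inner ℝ (Λ x) (Λ y) := by
    rw [ContinuousLinearMap.comp_apply, ContinuousLinearMap.adjoint_inner_left]
  have hT : (T : V →ₗ[ℝ] V).IsSymmetric := fun x y => by
    rw [ContinuousLinearMap.coe_coe, hinner, ContinuousLinearMap.comp_apply,
      ContinuousLinearMap.adjoint_inner_right]
  let b := hT.eigenvectorBasis rfl
  have horth : ∀ i v, inner ℝ (Λ (b i)) (Λ v) = inner ℝ (b i) v * ‖Λ (b i)‖ ^ 2 := by
    intro i v
    have heigen : T (b i) = hT.eigenvalues rfl i • b i := hT.apply_eigenvectorBasis rfl i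
    have hnorm : ‖Λ (b i)‖ ^ 2 = hT.eigenvalues rfl i := by
      rw [← real_inner_self_eq_norm_sq, ← hinner, heigen, real_inner_smul_left,
        real_inner_self_eq_norm_sq, b.norm_eq_one, one_pow, mul_one]
    rw [hnorm, ← hinner, heigen, real_inner_smul_left, mul_comm]
  refine ⟨b, fun i v => ?_⟩
  rcases (norm_nonneg (Λ (b i))).eq_or_lt with hzero | hpos
  · rw [← hzero, mul_zero]
    exact norm_nonneg _
  · refine le_of_mul_le_mul_right ?_ hpos
    calc |inner ℝ (b i) v| * ‖Λ (b i)‖ * ‖Λ (b i)‖ = |inner ℝ (Λ (b i)) (Λ v)| := by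
          rw [horth, abs_mul, abs_of_nonneg (sq_nonneg ‖Λ (b i)‖), mul_assoc, sq]
      _ ≤ ‖Λ v‖ * ‖Λ (b i)‖ := (abs_real_inner_le_norm _ _).trans_eq (mul_comm _ _)

variable [MeasurableSpace V] [BorelSpace V]

namespace IsAlmostHarmonic

/-- The frequency of the rescalings of `ψ` about `p`. -/
def freq (h : IsAlmostHarmonic c ψ C U) (p : V) : ℝ → ℝ :=
  frequency (fun r => blowup p r ψ) fun r => blowup p r (sphericalDeriv c h.contDiff p)

lemma blowup_ne_zero_of_freq_ne_zero (h : IsAlmostHarmonic c ψ C U) {p : V} {r : ℝ}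
    (hr : h.freq p r ≠ 0) : blowup p r ψ ≠ 0 := by
  contrapose! hr
  rw [freq, frequency, hr, inner_zero_right, zero_div]

lemma norm_blowup_radialDeriv_le (h : IsAlmostHarmonic c ψ C U) {ι : Type*} [Fintype ι]
    (b : OrthonormalBasis ι ℝ V) (p : V) {r : ℝ} (hr : 0 ≤ r) :
    ‖blowup p r (radialDeriv h.contDiff p)‖ ≤
      ∑ i, r * ‖blowup p r (dirDeriv h.contDiff (b i))‖ := by
  have hsum := norm_blowup_le_add_sum (s := Finset.univ) (p := p) hr
    (F := radialDeriv h.contDiff p) (G₀ := 0) (G := fun i => r • dirDeriv h.contDiff (b i))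
    fun x hx => by
      rw [ContinuousMap.zero_apply, norm_zero, zero_add, radialDeriv_apply]
      refine (norm_apply_le_norm_mul_sum b _ _).trans ?_
      simp only [ContinuousMap.smul_apply, norm_smul, Real.norm_of_nonneg hr, ← Finset.mul_sum,
        dirDeriv_apply]
      gcongr
      exact mem_closedBall_iff_norm.1 hx
  simpa [norm_smul, abs_of_nonneg hr] using hsum

lemma norm_blowup_dirDeriv_le (h : IsAlmostHarmonic c ψ C U) (hC : 0 ≤ C) {ι : Type*} [Fintype ι]
    [DecidableEq ι] (b : OrthonormalBasis ι ℝ V) {p : V} {r : ℝ} (hr : 0 ≤ r)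
    (hU : closedBall p r ⊆ U) (i₀ : ι) :
    ‖blowup p r (dirDeriv h.contDiff (b i₀))‖ ≤ C * ‖blowup p r ψ‖
      + ∑ i ∈ Finset.univ.erase i₀, ‖blowup p r (dirDeriv h.contDiff (b i))‖ := by
  have hsum := norm_blowup_le_add_sum (s := Finset.univ.erase i₀) (p := p) hr
    (F := dirDeriv h.contDiff (b i₀)) (G₀ := C • ψ) (G := fun i => dirDeriv h.contDiff (b i))
    fun x hx => (h.isCliffordMul.norm_apply_le_norm_diracTrace_add_sum b _ i₀).trans
      (add_le_add_left (h.norm_diracTrace_le_norm_smul (hU hx)) _)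
  rwa [map_smul, norm_smul, Real.norm_of_nonneg hC] at hsum

variable [CompleteSpace E]

lemma isFrequencySystem (h : IsAlmostHarmonic c ψ C U) {p : V} {R : ℝ} (hU : ball p R ⊆ U) :
    IsFrequencySystem (fun r => blowup p r ψ)
      (fun r => blowup p r (sphericalDeriv c h.contDiff p))
      (fun r => blowup p r (radialDeriv h.contDiff p - sphericalDeriv c h.contDiff p)) C R where
  hasDerivAt r hr := by
    rw [← map_add, add_sub_cancel]
    exact hasDerivAt_blowup h.contDiff p hr.1.ne'
  continuous := continuous_blowup p _
  symm r s := h.isCliffordMul.inner_blowup_sphericalDeriv h.contDiff p r s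
  norm_le r hr := norm_blowup_le_mul hr.1.le fun x hx => by
    have hxU : x ∈ U := hU (closedBall_subset_ball hr.2 hx)
    rw [ContinuousMap.sub_apply, radialDeriv_apply, sphericalDeriv_apply, sphericalOp,
      sub_add_cancel_left, norm_neg, h.isCliffordMul.norm_apply, mul_comm C, mul_assoc]
    have hr0 := hr.1.le
    gcongr
    · exact mem_closedBall_iff_norm.1 hx
    · exact h.norm_diracTrace_le x hxU

lemma eqOn_ball_zero (h : IsAlmostHarmonic c ψ C U) {p : V} {r R : ℝ} (hU : ball p R ⊆ U)
    (hr : 0 < r) (hp : blowup p r ψ = 0) : Set.EqOn ψ 0 (ball p R) := by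
  intro x hx
  obtain ⟨s, hxs, hsR⟩ := exists_between (mem_ball.1 hx)
  have hs : 0 < s := dist_nonneg.trans_lt hxs
  by_contra hx0
  have hus : blowup p s ψ ≠ 0 := fun hs0 => hx0 ((blowup_eq_zero_iff hs).1 hs0 hxs.le)
  have hmin : 0 < min r s := lt_min hr hs
  refine (h.isFrequencySystem hU).ne_zero_of_ne_zero hmin (min_le_right r s) hsR hus ?_
  exact (blowup_eq_zero_iff hmin).2
    (((blowup_eq_zero_iff hr).1 hp).mono (closedBall_subset_closedBall (min_le_left r s)))

lemma exists_tendsto_freq (h : IsAlmostHarmonic c ψ C U) {p : V} (hU : U ∈ nhds p) (hp : ψ p = 0)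
    (hne : ∃ᶠ y in nhds p, ψ y ≠ 0) :
    ∃ ν : ℝ, 1 ≤ ν ∧ Tendsto (h.freq p) (nhdsWithin 0 (Set.Ioi 0)) (nhds ν) := by
  obtain ⟨R, hR, hball⟩ := Metric.mem_nhds_iff.1 hU
  obtain ⟨L, hL⟩ := exists_norm_blowup_le_mul h.contDiff hp R
  exact (h.isFrequencySystem hball).exists_tendsto_frequency hR
    (fun r hr => blowup_ne_zero_of_frequently hne hr.1) hL

lemma norm_blowup_radialDeriv_sub_smul_sq_le (h : IsAlmostHarmonic c ψ C U) {x y : V}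
    {r q δ : ℝ} (hr : 0 < r) (hU : ball y (4 * r) ⊆ U) (hyx : dist y x ≤ r)
    (hu : ∀ s ∈ Set.Icc (2 * r) (3 * r), blowup y s ψ ≠ 0)
    (hpinch : ∀ s ∈ Set.Icc (2 * r) (3 * r), |h.freq y s - q| ≤ δ) :
    ‖blowup x r (radialDeriv h.contDiff y - q • ψ)‖ ^ 2 ≤
      4 ^ Module.finrank ℝ V * pinchingError C δ r * ‖blowup x (4 * r) ψ‖ ^ 2 := by
  obtain ⟨s, hs, hle⟩ := (h.isFrequencySystem hU).exists_norm_sub_smul_sq_le hr (by linarith)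
    hu hpinch
  rw [← map_add, add_sub_cancel, ← map_smul, ← map_sub] at hle
  have hs0 : 0 < s := by linarith [hs.1]
  have herr : 0 ≤ pinchingError C δ r := pinchingError_nonneg
    ((abs_nonneg _).trans (hpinch s (Set.Ioo_subset_Icc_self hs))) C r
  have hinner : closedBall x r ⊆ closedBall y s :=
    closedBall_subset_closedBall' (by rw [dist_comm]; linarith [hs.1])
  have houter : closedBall y s ⊆ closedBall x (4 * r) :=
    closedBall_subset_closedBall' (by linarith [hs.2])
  refine le_of_mul_le_mul_left ?_ (pow_pos hr (Module.finrank ℝ V))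
  calc r ^ Module.finrank ℝ V * ‖blowup x r (radialDeriv h.contDiff y - q • ψ)‖ ^ 2
      ≤ s ^ Module.finrank ℝ V * ‖blowup y s (radialDeriv h.contDiff y - q • ψ)‖ ^ 2 :=
        pow_mul_norm_blowup_sq_mono _ hr hs0 hinner
    _ ≤ s ^ Module.finrank ℝ V * (pinchingError C δ r * ‖blowup y s ψ‖ ^ 2) := by gcongr
    _ = pinchingError C δ r * (s ^ Module.finrank ℝ V * ‖blowup y s ψ‖ ^ 2) := by ring
    _ ≤ pinchingError C δ r * ((4 * r) ^ Module.finrank ℝ V * ‖blowup x (4 * r) ψ‖ ^ 2) :=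
        mul_le_mul_of_nonneg_left (pow_mul_norm_blowup_sq_mono _ hs0 (by positivity) houter) herr
    _ = r ^ Module.finrank ℝ V *
        (4 ^ Module.finrank ℝ V * pinchingError C δ r * ‖blowup x (4 * r) ψ‖ ^ 2) := by
      rw [mul_pow]
      ring

/-- The Dirac equation prevents the derivative of `ψ` from concentrating in a single direction. -/
lemma exists_ne_le_norm_blowup_dirDeriv (h : IsAlmostHarmonic c ψ C U) {ι : Type*} [Fintype ι]
    (b : OrthonormalBasis ι ℝ V) {p : V} {r R : ℝ} (hr : r ∈ Set.Ioo 0 R)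
    (hU : ball p R ⊆ U) (hCr : C * r ≤ 1 / 8) (hfreq : 1 / 2 ≤ h.freq p r) :
    ∃ i₁ i₂, i₁ ≠ i₂ ∧
      ‖blowup p r ψ‖ / (8 * Fintype.card ι) ≤ r * ‖blowup p r (dirDeriv h.contDiff (b i₁))‖ ∧
      ‖blowup p r ψ‖ / (8 * Fintype.card ι) ≤ r * ‖blowup p r (dirDeriv h.contDiff (b i₂))‖ := by
  classical
  have hsystem := h.isFrequencySystem hU
  have hu := h.blowup_ne_zero_of_freq_ne_zero (by linarith : h.freq p r ≠ 0)
  have hC : 0 ≤ C := hsystem.const_nonneg hr hu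
  have hupos : 0 < ‖blowup p r ψ‖ := norm_pos_iff.2 hu
  have hr0 := hr.1.le
  set u := ‖blowup p r ψ‖
  have hradial : 3 / 8 * u ≤ ∑ i, r * ‖blowup p r (dirDeriv h.contDiff (b i))‖ := by
    have hlower := hsystem.frequency_sub_mul_norm_le hr
    rw [← map_add, add_sub_cancel] at hlower
    refine le_trans ?_ (hlower.trans (h.norm_blowup_radialDeriv_le b p hr0))
    gcongr
    change _ ≤ h.freq p r - C * r
    linarith
  have hdirac (i₀ : ι) : r * ‖blowup p r (dirDeriv h.contDiff (b i₀))‖ ≤ 1 / 8 * u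
      + ∑ i ∈ Finset.univ.erase i₀, r * ‖blowup p r (dirDeriv h.contDiff (b i))‖ := by
    have hU' : closedBall p r ⊆ U := (closedBall_subset_ball hr.2).trans hU
    calc r * ‖blowup p r (dirDeriv h.contDiff (b i₀))‖
        ≤ r * (C * u + ∑ i ∈ Finset.univ.erase i₀, ‖blowup p r (dirDeriv h.contDiff (b i))‖) := by
          gcongr
          exact h.norm_blowup_dirDeriv_le hC b hr0 hU' i₀
      _ = C * r * u + ∑ i ∈ Finset.univ.erase i₀,
          r * ‖blowup p r (dirDeriv h.contDiff (b i))‖ := by rw [← Finset.mul_sum]; ring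
      _ ≤ _ := by gcongr
  have hnonempty : Nonempty ι := by
    by_contra! hempty
    rw [Finset.univ_eq_empty, Finset.sum_empty] at hradial
    linarith
  have hthreshold : (3 / 8 * u - 1 / 8 * u) / (2 * Fintype.card ι) = u / (8 * Fintype.card ι) := by
    field_simp
    norm_num
  rw [← hthreshold]
  exact exists_ne_le_of_le_add_sum (by linarith) hradial hdirac

end IsAlmostHarmonic

end AlmostHarmonic

section PinchedSet

variable {V E : Type*} [NormedAddCommGroup V] [InnerProductSpace ℝ V] [FiniteDimensional ℝ V]
  [MeasurableSpace V] [BorelSpace V] [NormedAddCommGroup E] [InnerProductSpace ℝ E]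
  {c : V →L[ℝ] E →L[ℝ] E} {ψ : C(V, E)} {C : ℝ} {U : Set V}

open Module (finrank)

lemma exists_nat_sqrt_div_lt_one_and_mul_rpow_le (d k : ℕ) {ε : ℝ} (hε : 0 < ε) :
    ∃ m : ℕ, m ≠ 0 ∧ √d / m < 1 ∧
      ((9 * (2 * m + 1) ^ k : ℕ) : ℝ) * (√d / m) ^ ((k : ℝ) + ε) ≤ 1 := by
  have hpow : Tendsto (fun m : ℕ => 9 * 3 ^ k * √d ^ ((k : ℝ) + ε) * (m : ℝ) ^ (-ε)) atTop
      (nhds 0) := by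
    rw [← mul_zero (9 * 3 ^ k * √d ^ ((k : ℝ) + ε))]
    exact ((tendsto_rpow_neg_atTop hε).comp tendsto_natCast_atTop_atTop).const_mul _
  have hdiv : Tendsto (fun m : ℕ => √d / m) atTop (nhds 0) :=
    tendsto_const_nhds.div_atTop tendsto_natCast_atTop_atTop
  obtain ⟨m, hm, hm1, hm0⟩ := ((hpow.eventually_le_const zero_lt_one).and
    ((hdiv.eventually_lt_const zero_lt_one).and (eventually_ge_atTop 1))).exists
  have hmpos : (0 : ℝ) < m := by exact_mod_cast hm0
  have hm1' : (1 : ℝ) ≤ m := by exact_mod_cast hm0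
  refine ⟨m, by lia, hm1, le_trans ?_ hm⟩
  calc ((9 * (2 * m + 1) ^ k : ℕ) : ℝ) * (√d / m) ^ ((k : ℝ) + ε)
      ≤ 9 * (3 * m) ^ k * (√d / m) ^ ((k : ℝ) + ε) := by
        push_cast
        gcongr
        linarith
    _ = 9 * 3 ^ k * √d ^ ((k : ℝ) + ε) * (m : ℝ) ^ (-ε) := by
        rw [Real.div_rpow (by positivity) hmpos.le, Real.rpow_add hmpos, Real.rpow_natCast,
          Real.rpow_neg hmpos.le, mul_pow]
        field_simp

namespace IsAlmostHarmonic

/-- The points at which the frequency of `ψ` is, at all scales up to `4 r₁`, within `δ` of `q` and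
bounded by `K`. -/
def pinchedSet (h : IsAlmostHarmonic c ψ C U) (q δ K r₁ : ℝ) : Set V :=
  {x | ball x (5 * r₁) ⊆ U ∧
    ∀ s ∈ Set.Ioc 0 (4 * r₁), |h.freq x s - q| ≤ δ ∧ h.freq x s ∈ Set.Icc (1 / 2) K}

lemma blowup_ne_zero_of_mem_pinchedSet (h : IsAlmostHarmonic c ψ C U) {q δ K r₁ : ℝ} {x : V}
    (hx : x ∈ h.pinchedSet q δ K r₁) {s : ℝ} (hs : s ∈ Set.Ioc 0 (4 * r₁)) :
    blowup x s ψ ≠ 0 :=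
  h.blowup_ne_zero_of_freq_ne_zero (by linarith [(hx.2 s hs).2.1])

variable [CompleteSpace E]

lemma const_nonneg_of_mem_pinchedSet (h : IsAlmostHarmonic c ψ C U) {q δ K r₁ : ℝ} {x : V}
    (hx : x ∈ h.pinchedSet q δ K r₁) (hr₁ : 0 < r₁) : 0 ≤ C :=
  (h.isFrequencySystem hx.1).const_nonneg (r := r₁) ⟨hr₁, by linarith⟩
    (h.blowup_ne_zero_of_mem_pinchedSet hx ⟨hr₁, by linarith⟩)

lemma norm_blowup_dirDeriv_sub_sq_le (h : IsAlmostHarmonic c ψ C U) {q δ K r₁ r : ℝ} {x y : V}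
    (hx : x ∈ h.pinchedSet q δ K r₁) (hy : y ∈ h.pinchedSet q δ K r₁) (hr : r ∈ Set.Ioc 0 r₁)
    (hyx : dist y x ≤ r) :
    ‖blowup x r (dirDeriv h.contDiff (y - x))‖ ^ 2 ≤
      pinchingConst (finrank ℝ V) C K δ r * ‖blowup x r ψ‖ ^ 2 := by
  obtain ⟨hr0, hr1⟩ := hr
  have hradial {z : V} (hz : z ∈ h.pinchedSet q δ K r₁) (hzx : dist z x ≤ r) :
      ‖blowup x r (radialDeriv h.contDiff z - q • ψ)‖ ^ 2 ≤
        4 ^ finrank ℝ V * pinchingError C δ r * ‖blowup x (4 * r) ψ‖ ^ 2 := by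
    have hmem {s : ℝ} (hs : s ∈ Set.Icc (2 * r) (3 * r)) : s ∈ Set.Ioc 0 (4 * r₁) :=
      ⟨by linarith [hs.1], by linarith [hs.2]⟩
    exact h.norm_blowup_radialDeriv_sub_smul_sq_le hr0
      ((ball_subset_ball (by linarith)).trans hz.1) hzx
      (fun s hs => h.blowup_ne_zero_of_mem_pinchedSet hz (hmem hs))
      (fun s hs => (hz.2 s (hmem hs)).1)
  have hdoubling : ‖blowup x (4 * r) ψ‖ ^ 2 ≤
      4 ^ (2 * K) * Real.exp (6 * C * r) * ‖blowup x r ψ‖ ^ 2 :=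
    (h.isFrequencySystem hx.1).norm_sq_four_mul_le hr0 (by linarith) fun t ht =>
      (hx.2 t ⟨hr0.trans ht.1, by linarith [ht.2]⟩).2.2
  have herr : 0 ≤ pinchingError C δ r := pinchingError_nonneg
    ((abs_nonneg _).trans (hx.2 r ⟨hr0, by linarith⟩).1) C r
  have hxx := hradial hx (by rw [dist_self]; exact hr0.le)
  have hyy := hradial hy hyx
  rw [dirDeriv_sub, ← sub_sub_sub_cancel_right _ _ (q • ψ), map_sub]
  set A := blowup x r (radialDeriv h.contDiff x - q • ψ)
  set B := blowup x r (radialDeriv h.contDiff y - q • ψ)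
  calc ‖A - B‖ ^ 2 ≤ 2 * (‖A‖ ^ 2 + ‖B‖ ^ 2) := by
        refine (pow_le_pow_left₀ (norm_nonneg _) (norm_sub_le A B) 2).trans ?_
        linarith [sq_nonneg (‖A‖ - ‖B‖)]
    _ ≤ 4 ^ (finrank ℝ V + 1) * pinchingError C δ r * ‖blowup x (4 * r) ψ‖ ^ 2 := by
        rw [pow_succ (4 : ℝ)]
        linarith
    _ ≤ 4 ^ (finrank ℝ V + 1) * pinchingError C δ r *
        (4 ^ (2 * K) * Real.exp (6 * C * r) * ‖blowup x r ψ‖ ^ 2) := by gcongr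
    _ = pinchingConst (finrank ℝ V) C K δ r * ‖blowup x r ψ‖ ^ 2 := by
        rw [pinchingConst]
        ring

lemma mul_norm_blowup_dirDeriv_sub_le (h : IsAlmostHarmonic c ψ C U) {q δ K r₁ r t : ℝ} {x y : V}
    (ht : 0 ≤ t) (hsmall : t ^ 2 * pinchingConst (finrank ℝ V) C K δ r₁ ≤ 1)
    (hx : x ∈ h.pinchedSet q δ K r₁) (hy : y ∈ h.pinchedSet q δ K r₁) (hr : r ∈ Set.Ioc 0 r₁)
    (hyx : dist y x ≤ r) :
    t * ‖blowup x r (dirDeriv h.contDiff (y - x))‖ ≤ ‖blowup x r ψ‖ := by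
  have hC : 0 ≤ C := h.const_nonneg_of_mem_pinchedSet hx (hr.1.trans_le hr.2)
  have hδ : 0 ≤ δ := (abs_nonneg _).trans (hx.2 r ⟨hr.1, by linarith [hr.1, hr.2]⟩).1
  rw [← sq_le_sq₀ (by positivity) (norm_nonneg _), mul_pow]
  calc t ^ 2 * ‖blowup x r (dirDeriv h.contDiff (y - x))‖ ^ 2
      ≤ t ^ 2 * (pinchingConst (finrank ℝ V) C K δ r₁ * ‖blowup x r ψ‖ ^ 2) := by
        refine mul_le_mul_of_nonneg_left
          ((h.norm_blowup_dirDeriv_sub_sq_le hx hy hr hyx).trans ?_) (sq_nonneg _)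
        gcongr
        exact pinchingConst_mono hC hδ hr.1.le hr.2
    _ ≤ ‖blowup x r ψ‖ ^ 2 := by
        rw [← mul_assoc]
        exact mul_le_of_le_one_left (sq_nonneg _) hsmall

lemma exists_orthonormalBasis_abs_inner_le (h : IsAlmostHarmonic c ψ C U) {q δ K r₁ r : ℝ} {m : ℕ}
    (hCr : C * r₁ ≤ 1 / 8)
    (hsmall : (8 * finrank ℝ V * m) ^ 2 * pinchingConst (finrank ℝ V) C K δ r₁ ≤ 1) (hm : m ≠ 0)
    {x : V} (hx : x ∈ h.pinchedSet q δ K r₁) (hr : r ∈ Set.Ioc 0 r₁) :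
    ∃ (b : OrthonormalBasis (Fin (finrank ℝ V)) ℝ V) (i₁ i₂ : Fin (finrank ℝ V)), i₁ ≠ i₂ ∧
      ∀ y ∈ h.pinchedSet q δ K r₁ ∩ closedBall x r,
        |inner ℝ (b i₁) (y - x)| ≤ r / m ∧ |inner ℝ (b i₂) (y - x)| ≤ r / m := by
  have hrmem : r ∈ Set.Ioc 0 (4 * r₁) := ⟨hr.1, by linarith [hr.1, hr.2]⟩
  have hrR : r ∈ Set.Ioo 0 (5 * r₁) := ⟨hr.1, by linarith [hr.1, hr.2]⟩
  have hC := h.const_nonneg_of_mem_pinchedSet hx (hr.1.trans_le hr.2)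
  let Λ := ((blowup x r : C(V, E) →L[ℝ] BallL2 V E).toLinearMap ∘ₗ
    dirDeriv h.contDiff).toContinuousLinearMap
  obtain ⟨b, hb⟩ := exists_orthonormalBasis_abs_inner_mul_norm_le Λ
  obtain ⟨i₁, i₂, hi, hi₁, hi₂⟩ := h.exists_ne_le_norm_blowup_dirDeriv b hrR hx.1
    (le_trans (by gcongr; exact hr.2) hCr) (hx.2 r hrmem).2.1
  rw [Fintype.card_fin] at hi₁ hi₂
  have hd : 0 < (finrank ℝ V : ℝ) := by exact_mod_cast Fin.pos i₁
  have hm0 : 0 < (m : ℝ) := by positivity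
  set u := ‖blowup x r ψ‖
  have hupos : 0 < u := norm_pos_iff.2 (h.blowup_ne_zero_of_mem_pinchedSet hx hrmem)
  have hthin {i : Fin (finrank ℝ V)} (hle : u / (8 * finrank ℝ V) ≤ r * ‖Λ (b i)‖) {y : V}
      (hy : y ∈ h.pinchedSet q δ K r₁ ∩ closedBall x r) : |inner ℝ (b i) (y - x)| ≤ r / m := by
    rw [div_le_iff₀ (by positivity)] at hle
    rw [le_div_iff₀ hm0]
    refine le_of_mul_le_mul_right ?_ hupos
    calc |inner ℝ (b i) (y - x)| * m * u
        ≤ |inner ℝ (b i) (y - x)| * m * (r * ‖Λ (b i)‖ * (8 * finrank ℝ V)) := by gcongr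
      _ = r * (8 * finrank ℝ V * m * (|inner ℝ (b i) (y - x)| * ‖Λ (b i)‖)) := by ring
      _ ≤ r * (8 * finrank ℝ V * m * ‖Λ (y - x)‖) := by
          have hr0 := hr.1.le
          gcongr
          exact hb i (y - x)
      _ ≤ r * u := mul_le_mul_of_nonneg_left
          (h.mul_norm_blowup_dirDeriv_sub_le (by positivity) hsmall hx hy.1 hr hy.2) hr.1.le
  exact ⟨b, i₁, i₂, hi, fun y hy => ⟨hthin hi₁ hy, hthin hi₂ hy⟩⟩

lemma hasBallCovers_pinchedSet (h : IsAlmostHarmonic c ψ C U) {q δ K r₁ : ℝ} {m : ℕ}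
    (hCr : C * r₁ ≤ 1 / 8)
    (hsmall : (8 * finrank ℝ V * m) ^ 2 * pinchingConst (finrank ℝ V) C K δ r₁ ≤ 1) (hm : m ≠ 0) :
    HasBallCovers (h.pinchedSet q δ K r₁) (9 * (2 * m + 1) ^ (finrank ℝ V - 2))
      (√(finrank ℝ V) / m) r₁ := by
  intro x hx r hr
  obtain ⟨b, i₁, i₂, hi, hthin⟩ := h.exists_orthonormalBasis_abs_inner_le hCr hsmall hm hx hr
  obtain ⟨F, hcard, hF, hcover⟩ := exists_finset_cover_of_abs_inner_le b hr.1 hm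
    Set.inter_subset_right hi (fun y hy => (hthin y hy).1) (fun y hy => (hthin y hy).2)
  rw [Fintype.card_fin] at hcard hcover
  exact ⟨F, hcard, hF.trans Set.inter_subset_left, hcover⟩

lemma exists_mem_pinchedSet (h : IsAlmostHarmonic c ψ C U) {x : V} (hU : U ∈ nhds x)
    (hx : ψ x = 0) (hne : ∃ᶠ y in nhds x, ψ y ≠ 0) {t : ℕ → ℝ} (ht : ∀ k, 0 < t k) :
    ∃ (q : ℚ) (k j : ℕ), x ∈ h.pinchedSet q (t k) k (min (t k) (1 / (j + 1))) := by
  obtain ⟨ν, hν1, hν⟩ := h.exists_tendsto_freq hU hx hne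
  obtain ⟨k, hk⟩ := exists_nat_gt ν
  obtain ⟨q, hq⟩ := exists_rat_btwn (sub_lt_self ν (ht k))
  have hqν : |ν - q| < t k := by
    rw [abs_lt]
    constructor <;> linarith [ht k]
  have hev : ∀ᶠ s in nhdsWithin 0 (Set.Ioi 0),
      |h.freq x s - q| ≤ t k ∧ h.freq x s ∈ Set.Icc (1 / 2) (k : ℝ) :=
    ((hν.sub_const (q : ℝ)).abs.eventually_le_const hqν).and
      (hν.eventually (Icc_mem_nhds (by linarith) hk))
  obtain ⟨r, hr0, hr⟩ := mem_nhdsGT_iff_exists_Ioo_subset.1 hev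
  obtain ⟨ε, hε0, hε⟩ := Metric.mem_nhds_iff.1 hU
  have hmin : 0 < min r ε := lt_min hr0 hε0
  obtain ⟨j, hj⟩ := exists_nat_one_div_lt (by positivity : 0 < min r ε / 5)
  have hr₁ : 5 * min (t k) (1 / (j + 1)) < min r ε := by
    linarith [min_le_right (t k) (1 / ((j : ℝ) + 1))]
  refine ⟨q, k, j, (ball_subset_ball (hr₁.le.trans (min_le_right r ε))).trans hε, fun s hs => ?_⟩
  refine hr ⟨hs.1, ?_⟩
  linarith [hs.1, hs.2, min_le_left r ε]

theorem dimH_zeroSet_le (h : IsAlmostHarmonic c ψ C U) (hU : IsOpen U)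
    (hne : ∀ x ∈ U, ∃ᶠ y in nhds x, ψ y ≠ 0) :
    dimH {x | x ∈ U ∧ ψ x = 0} ≤ (finrank ℝ V - 2 : ℕ) := by
  rcases subsingleton_or_nontrivial V with hV | hV
  · exact (dimH_subsingleton (Set.subsingleton_of_subsingleton)).trans_le bot_le
  have hd : 0 < (finrank ℝ V : ℝ) := by exact_mod_cast Module.finrank_pos
  refine ENNReal.le_of_forall_pos_le_add fun ε hε _ => ?_
  obtain ⟨m, hm, hθ1, hM⟩ := exists_nat_sqrt_div_lt_one_and_mul_rpow_le (finrank ℝ V)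
    (finrank ℝ V - 2) (NNReal.coe_pos.2 hε)
  have hsmall (k : ℕ) : ∃ t > 0, C * t ≤ 1 / 8 ∧
      pinchingConst (finrank ℝ V) C k t t ≤ 1 / (8 * finrank ℝ V * m : ℝ) ^ 2 :=
    exists_pinchingConst_le _ C k (by positivity)
  choose t ht0 hCt ht using hsmall
  have hcover : {x | x ∈ U ∧ ψ x = 0} ⊆
      ⋃ (q : ℚ) (k : ℕ) (j : ℕ), h.pinchedSet q (t k) k (min (t k) (1 / (j + 1))) := by
    rintro x ⟨hxU, hx⟩
    simpa only [Set.mem_iUnion] using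
      h.exists_mem_pinchedSet (hU.mem_nhds hxU) hx (hne x hxU) ht0
  refine (dimH_mono hcover).trans ?_
  simp only [dimH_iUnion, iSup_le_iff]
  intro q k j
  rcases (h.pinchedSet q (t k) k (min (t k) (1 / (j + 1)))).eq_empty_or_nonempty
    with hempty | ⟨x, hx⟩
  · rw [hempty, dimH_empty]
    exact bot_le
  have hr₁ : 0 < min (t k) (1 / ((j : ℝ) + 1)) := lt_min (ht0 k) (by positivity)
  have hC := h.const_nonneg_of_mem_pinchedSet hx hr₁
  have hcovers := h.hasBallCovers_pinchedSet (q := q) (δ := t k) (K := k)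
    ((mul_le_mul_of_nonneg_left (min_le_left _ _) hC).trans (hCt k))
    ((le_div_iff₀' (by positivity)).1 <|
      (pinchingConst_mono hC (ht0 k).le hr₁.le (min_le_left _ _)).trans (ht k)) hm
  simpa using hcovers.dimH_le (s := (finrank ℝ V - 2 : ℕ) + ε) (by positivity) hθ1 hr₁
    (by exact_mod_cast hM)

end IsAlmostHarmonic

end PinchedSet

section Localization

open scoped Manifold in
lemma exists_contDiff_eventuallyEq {V E : Type*} [NormedAddCommGroup V] [NormedSpace ℝ V]
    [FiniteDimensional ℝ V] [HasContDiffBump V] [NormedAddCommGroup E] [NormedSpace ℝ E] {n : ℕ}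
    {f : V → E} {x : V} (hf : ContDiffAt ℝ n f x) : ∃ g, ContDiff ℝ n g ∧ g =ᶠ[nhds x] f := by
  obtain ⟨R, hR, hfR⟩ := Metric.nhds_basis_closedBall.eventually_iff.1 (hf.eventually (by simp))
  let χ : ContDiffBump x := ⟨R / 2, R, half_pos hR, half_lt_self hR⟩
  refine ⟨fun y => χ y • f y, contMDiff_iff_contDiff.1 <| contMDiff_of_tsupport fun y hy => ?_, ?_⟩
  · have hyR : y ∈ closedBall x R := by
      rw [← show χ.rOut = R from rfl, ← χ.tsupport_eq]
      exact tsupport_smul_subset_left _ _ hy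
    exact (χ.contDiffAt.smul (hfR hyR)).contMDiffAt
  · filter_upwards [χ.eventuallyEq_one] with y hy
    rw [hy, Pi.one_apply, one_smul]

variable {V E : Type*} [NormedAddCommGroup V] [InnerProductSpace ℝ V] [FiniteDimensional ℝ V]
  [NormedAddCommGroup E] [InnerProductSpace ℝ E] {c : V →L[ℝ] E →L[ℝ] E} {ψ : V → E}

lemma exists_isAlmostHarmonic_eqOn_ball (hc : IsCliffordMul c) {x : V} {W : Set V}
    (hW : W ∈ nhds x) (hψ : ContDiffAt ℝ 1 ψ x)
    (hD : (fun y => diracTrace c (fderiv ℝ ψ y)) =O[nhds x] ψ) :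
    ∃ (φ : C(V, E)) (C : ℝ), ∃ r > 0, ball x r ⊆ W ∧ IsAlmostHarmonic c φ C (ball x r) ∧
      Set.EqOn φ ψ (ball x r) := by
  obtain ⟨φ, hφ, hφψ⟩ := exists_contDiff_eventuallyEq (n := 1) (mod_cast hψ)
  obtain ⟨C, hC⟩ := hD.bound
  obtain ⟨r, hr, hball⟩ := Metric.eventually_nhds_iff_ball.1
    ((eventually_mem_nhds_iff.2 hW).and (hC.and hφψ.eventuallyEq_nhds))
  refine ⟨⟨φ, hφ.continuous⟩, C, r, hr, fun y hy => mem_of_mem_nhds (hball y hy).1,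
    ⟨hc, mod_cast hφ, fun y hy => ?_⟩, fun y hy => (hball y hy).2.2.eq_of_nhds⟩
  obtain ⟨-, hCy, hy⟩ := hball y hy
  rw [ContinuousMap.coe_mk, hy.fderiv_eq, hy.eq_of_nhds]
  exact hCy

variable [CompleteSpace E] {U : Set V}

theorem frequently_ne_zero_of_isPreconnected (hc : IsCliffordMul c) (hU : IsOpen U)
    (hUc : IsPreconnected U) (hψ : ContDiffOn ℝ 1 ψ U)
    (hD : ∀ x ∈ U, (fun y => diracTrace c (fderiv ℝ ψ y)) =O[nhds x] ψ)
    (hne : ∃ x ∈ U, ψ x ≠ 0) {x : V} (hx : x ∈ U) : ∃ᶠ y in nhds x, ψ y ≠ 0 := by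
  borelize V
  intro hzero
  simp only [not_not] at hzero
  let Z := {y | ∀ᶠ z in nhds y, ψ z = 0}
  have hZ : closure Z ∩ U ⊆ Z := by
    rintro y ⟨hyZ, hyU⟩
    obtain ⟨φ, C, r, hr, -, h, hφψ⟩ := exists_isAlmostHarmonic_eqOn_ball hc univ_mem
      (hψ.contDiffAt (hU.mem_nhds hyU)) (hD y hyU)
    obtain ⟨z, hz, hyz⟩ := Metric.mem_closure_iff.1 hyZ (r / 2) (half_pos hr)
    have hsub : ball z (r / 2) ⊆ ball y r := ball_subset_ball' (by rw [dist_comm]; linarith)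
    have hφz : ∀ᶠ w in nhds z, φ w = 0 := by
      filter_upwards [hz, ball_mem_nhds z (half_pos hr)] with w hw hwr
      rw [hφψ (hsub hwr), hw]
    obtain ⟨s, hs, hφs⟩ := Metric.nhds_basis_closedBall.eventually_iff.1 hφz
    have hφ0 := h.eqOn_ball_zero hsub hs ((blowup_eq_zero_iff hs).2 fun w hw => hφs hw)
    filter_upwards [isOpen_ball.mem_nhds (mem_ball.2 hyz)] with w hw
    rw [← hφψ (hsub hw), hφ0 hw, Pi.zero_apply]
  obtain ⟨y, hyU, hy⟩ := hne
  exact hy (hUc.subset_of_closure_inter_subset isOpen_setOfPred_eventually_nhds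
    ⟨x, hx, hzero⟩ hZ hyU).self_of_nhds

theorem dimH_zeroSet_le_of_isPreconnected (hc : IsCliffordMul c) (hU : IsOpen U)
    (hUc : IsPreconnected U) (hψ : ContDiffOn ℝ 1 ψ U)
    (hD : ∀ x ∈ U, (fun y => diracTrace c (fderiv ℝ ψ y)) =O[nhds x] ψ)
    (hne : ∃ x ∈ U, ψ x ≠ 0) :
    dimH {x | x ∈ U ∧ ψ x = 0} ≤ (Module.finrank ℝ V - 2 : ℕ) := by
  borelize V
  refine dimH_le_of_forall_exists_mem_nhdsWithin fun x hx => ?_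
  obtain ⟨φ, C, r, hr, hsub, h, hφψ⟩ := exists_isAlmostHarmonic_eqOn_ball hc
    (hU.mem_nhds hx.1) (hψ.contDiffAt (hU.mem_nhds hx.1)) (hD x hx.1)
  refine ⟨{y | y ∈ ball x r ∧ φ y = 0}, ?_, h.dimH_zeroSet_le isOpen_ball fun y hy => ?_⟩
  · filter_upwards [mem_nhdsWithin_of_mem_nhds (ball_mem_nhds x hr), self_mem_nhdsWithin]
      with y hyr hy
    exact ⟨hyr, (hφψ hyr).trans hy.2⟩
  · refine ((frequently_ne_zero_of_isPreconnected hc hU hUc hψ hD hne (hsub hy)).and_eventually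
      (isOpen_ball.mem_nhds hy)).mono fun z hz => ?_
    rw [hφψ hz.2]
    exact hz.1

end Localization

section OfOrthonormalBasis

variable {V E ι : Type*} [Fintype ι] [DecidableEq ι]

lemma sum_smul_apply_sum_smul_apply [AddCommGroup E] [Module ℝ E] {T : ι → E →ₗ[ℝ] E}
    (hT : ∀ i j x, T i (T j x) + T j (T i x) = (-2 : ℝ) • if i = j then x else 0)
    (v : ι → ℝ) (x : E) :
    ∑ i, v i • T i (∑ j, v j • T j x) = -((∑ i, v i ^ 2) • x) := by
  set S := ∑ i, ∑ j, (v i * v j) • T i (T j x) with hS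
  have hsymm : S = ∑ i, ∑ j, (v i * v j) • T j (T i x) := by
    rw [hS, Finset.sum_comm]
    simp_rw [mul_comm]
  have htwo : (2 : ℝ) • S = (-2 : ℝ) • (∑ i, v i ^ 2) • x := by
    calc (2 : ℝ) • S = ∑ i, ∑ j, (v i * v j) • (T i (T j x) + T j (T i x)) := by
          rw [two_smul]
          nth_rw 2 [hsymm]
          simp_rw [hS, smul_add, Finset.sum_add_distrib]
      _ = (-2 : ℝ) • (∑ i, v i ^ 2) • x := by
          simp_rw [hT, smul_ite, smul_zero, Finset.sum_ite_eq, Finset.mem_univ, if_true,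
            Finset.sum_smul, Finset.smul_sum, smul_smul]
          exact Finset.sum_congr rfl fun i _ => by ring_nf
  simp_rw [map_sum, map_smul, Finset.smul_sum, smul_smul]
  refine smul_right_injective E (two_ne_zero (α := ℝ)) ?_
  linear_combination (norm := module) htwo

lemma isCliffordMul_constrL [NormedAddCommGroup V] [InnerProductSpace ℝ V] [NormedAddCommGroup E]
    [InnerProductSpace ℝ E] {T : ι → E →L[ℝ] E} (b : OrthonormalBasis ι ℝ V)
    (hskew : ∀ i x y, inner ℝ (T i x) y = -inner ℝ x (T i y))
    (hT : ∀ i j x, T i (T j x) + T j (T i x) = (-2 : ℝ) • if i = j then x else 0) :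
    IsCliffordMul (b.toBasis.constrL T) where
  inner_apply_left v x y := by
    simp only [Module.Basis.constrL_apply, _root_.sum_apply, _root_.smul_apply, sum_inner,
      inner_sum, real_inner_smul_left, real_inner_smul_right, hskew, mul_neg,
      Finset.sum_neg_distrib]
  apply_apply_self v x := by
    have hv : ‖v‖ ^ 2 = ∑ i, b.toBasis.equivFun v i ^ 2 := by
      simpa [b.repr_apply_apply] using (b.sum_sq_norm_inner_right v).symm
    simp only [Module.Basis.constrL_apply, _root_.sum_apply, _root_.smul_apply, hv]
    exact sum_smul_apply_sum_smul_apply (T := fun i => (T i).toLinearMap) hT _ x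

end OfOrthonormalBasis

namespace CliffordRel

open scoped ComplexOrder MatrixOrder

variable {n N : ℕ} {α : Fin n → Matrix (Fin N) (Fin N) ℂ}

lemma mul_self (h : CliffordRel α) (j : Fin n) : α j * α j = -1 := by
  refine smul_right_injective _ (two_ne_zero (α := ℂ)) ?_
  simpa [two_smul ℂ (α j * α j)] using h j j

lemma mul_eq_neg_mul (h : CliffordRel α) {j k : Fin n} (hjk : j ≠ k) :
    α j * α k = -(α k * α j) :=
  eq_neg_of_add_eq_zero_left (by simpa [hjk] using h j k)

lemma exists_posDef (h : CliffordRel α) (s : Finset (Fin n)) :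
    ∃ G : Matrix (Fin N) (Fin N) ℂ, G.PosDef ∧ ∀ j ∈ s, (α j)ᴴ * G * α j = G := by
  induction s using Finset.induction_on with
  | empty => exact ⟨1, .one, by simp⟩
  | insert k s hk ih =>
    obtain ⟨G, hG, hinv⟩ := ih
    refine ⟨G + (α k)ᴴ * G * α k,
      hG.add_posSemidef (hG.posSemidef.conjTranspose_mul_mul_same _), fun j hj => ?_⟩
    have hcomp : ∀ A B : Matrix (Fin N) (Fin N) ℂ, Aᴴ * (Bᴴ * G * B) * A = (B * A)ᴴ * G * (B * A) :=
      fun A B => by simp only [conjTranspose_mul, mul_assoc]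
    rw [mul_add, add_mul, hcomp]
    rcases Finset.mem_insert.1 hj with rfl | hj
    · simp [h.mul_self, add_comm]
    · have hjk : k ≠ j := fun hkj => hk (hkj ▸ hj)
      rw [h.mul_eq_neg_mul hjk, conjTranspose_neg, neg_mul, neg_mul_neg, ← hcomp, hinv j hj]

lemma conj (h : CliffordRel α) (B : (Matrix (Fin N) (Fin N) ℂ)ˣ) :
    CliffordRel fun j => B.val * α j * B⁻¹.val := by
  intro j k
  have hmul : ∀ j k, B.val * α j * B⁻¹.val * (B.val * α k * B⁻¹.val) =
      B.val * (α j * α k) * B⁻¹.val := fun j k => by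
    simp only [mul_assoc, Units.inv_mul_cancel_left]
  rw [hmul, hmul, ← add_mul, ← mul_add, h j k]
  split_ifs <;> simp

lemma exists_conj_conjTranspose_eq_neg (h : CliffordRel α) :
    ∃ B : (Matrix (Fin N) (Fin N) ℂ)ˣ, ∀ j,
      (B.val * α j * B⁻¹.val)ᴴ = -(B.val * α j * B⁻¹.val) := by
  obtain ⟨G, hG, hinv⟩ := h.exists_posDef Finset.univ
  obtain ⟨_, ⟨B, rfl⟩, hGB⟩ :=
    CStarAlgebra.isStrictlyPositive_iff_eq_star_mul_self.mp hG.isStrictlyPositive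
  rw [star_eq_conjTranspose] at hGB
  refine ⟨B, fun j => ?_⟩
  set β := B.val * α j * B⁻¹.val with hβ
  have hunit : βᴴ * β = 1 := by
    calc βᴴ * β = B⁻¹.valᴴ * ((α j)ᴴ * (B.valᴴ * B.val) * α j) * B⁻¹.val := by
          simp only [hβ, conjTranspose_mul, mul_assoc]
      _ = (B.val * B⁻¹.val)ᴴ * (B.val * B⁻¹.val) := by
          rw [← hGB, hinv j (Finset.mem_univ j), hGB]
          simp only [conjTranspose_mul, mul_assoc]
      _ = 1 := by simp
  calc βᴴ = -(βᴴ * (β * β)) := by rw [(h.conj B).mul_self j]; simp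
    _ = -β := by rw [← mul_assoc, hunit, one_mul]

lemma isCliffordMul (h : CliffordRel α) (hα : ∀ j, (α j)ᴴ = -α j) :
    IsCliffordMul ((EuclideanSpace.basisFun (Fin n) ℝ).toBasis.constrL
      fun j => (toEuclideanCLM (n := Fin N) (𝕜 := ℂ) (α j)).restrictScalars ℝ) := by
  refine isCliffordMul_constrL _ (fun j x y => ?_) fun j k x => ?_
  · have hadj : ContinuousLinearMap.adjoint (toEuclideanCLM (n := Fin N) (𝕜 := ℂ) (α j)) =
        -toEuclideanCLM (n := Fin N) (𝕜 := ℂ) (α j) := by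
      rw [← ContinuousLinearMap.star_eq_adjoint, ← map_star, star_eq_conjTranspose, hα, map_neg]
    have hre : ∀ u v : EuclideanSpace ℂ (Fin N), inner ℝ u v = (inner ℂ u v).re := by
      simp [PiLp.inner_apply]
    rw [hre, hre, ContinuousLinearMap.coe_restrictScalars',
      ← ContinuousLinearMap.adjoint_inner_right, hadj, _root_.neg_apply, inner_neg_right,
      Complex.neg_re]
  · have hjk := congr(toEuclideanCLM (n := Fin N) (𝕜 := ℂ) $(h j k) x)
    rw [map_add, map_mul, map_mul, map_smul] at hjk
    split_ifs at hjk ⊢ <;> simpa [two_smul] using hjk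

lemma exists_isCliffordMul (h : CliffordRel α) :
    ∃ (c : EuclideanSpace ℝ (Fin n) →L[ℝ] EuclideanSpace ℂ (Fin N) →L[ℝ] EuclideanSpace ℂ (Fin N))
      (B : EuclideanSpace ℂ (Fin N) ≃L[ℝ] EuclideanSpace ℂ (Fin N)), IsCliffordMul c ∧
      ∀ j x, c (EuclideanSpace.single j 1) (B x) = B (toEuclideanLin (α j) x) := by
  obtain ⟨B, hB⟩ := h.exists_conj_conjTranspose_eq_neg
  let B' := ContinuousLinearEquiv.unitsEquiv ℂ (EuclideanSpace ℂ (Fin N))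
    (B.map (toEuclideanCLM (n := Fin N) (𝕜 := ℂ)))
  refine ⟨_, B'.restrictScalars ℝ, (h.conj B).isCliffordMul hB, fun j x => ?_⟩
  have hcomm : B.val * α j * B⁻¹.val * B.val = B.val * α j := Units.inv_mul_cancel_right _ _
  rw [← EuclideanSpace.basisFun_apply, ← OrthonormalBasis.coe_toBasis,
    Module.Basis.constrL_basis]
  have hcommx := congr(toEuclideanCLM (n := Fin N) (𝕜 := ℂ) $hcomm x)
  rwa [map_mul, map_mul _ B.val (α j)] at hcommx

end CliffordRel

lemma diracTrace_fderiv_comp_eq_diracOp {n N : ℕ} {α : Fin n → Matrix (Fin N) (Fin N) ℂ}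
    {c : EuclideanSpace ℝ (Fin n) →L[ℝ] EuclideanSpace ℂ (Fin N) →L[ℝ] EuclideanSpace ℂ (Fin N)}
    {B : EuclideanSpace ℂ (Fin N) →L[ℝ] EuclideanSpace ℂ (Fin N)}
    (hB : ∀ j x, c (EuclideanSpace.single j 1) (B x) = B (toEuclideanLin (α j) x))
    {ψ : EuclideanSpace ℝ (Fin n) → EuclideanSpace ℂ (Fin N)} {x : EuclideanSpace ℝ (Fin n)}
    (hψ : DifferentiableAt ℝ ψ x) :
    diracTrace c (fderiv ℝ (B ∘ ψ) x) = B (diracOp α ψ x) := by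
  rw [fderiv_comp x B.differentiableAt hψ, B.fderiv,
    diracTrace_eq_sum (EuclideanSpace.basisFun (Fin n) ℝ), diracOp, map_sum]
  simp only [EuclideanSpace.basisFun_apply, ContinuousLinearMap.comp_apply, hB]

lemma isBigO_norm_rpow_smul {X E : Type*} [TopologicalSpace X] [NormedAddCommGroup E]
    [NormedSpace ℝ E] {ψ : X → E} {x : X} (hψ : ContinuousAt ψ x) {p : ℝ} (hp : 0 ≤ p) :
    (fun y => ‖ψ y‖ ^ p • ψ y) =O[nhds x] ψ := by
  simpa using ((hψ.norm.rpow_const (.inr hp)).isBigO_one ℝ).smul (Asymptotics.isBigO_refl ψ _)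

theorem nodal_set_dimension_general {n N : ℕ} (hn : 2 ≤ n) {α : Fin n → Matrix (Fin N) (Fin N) ℂ}
    (hcl : CliffordRel α) {U : Set (EuclideanSpace ℝ (Fin n))} (hU : IsOpen U)
    (hUc : IsPreconnected U) {ψ : EuclideanSpace ℝ (Fin n) → EuclideanSpace ℂ (Fin N)}
    (hψ : ContDiffOn ℝ 1 ψ U) (hne : ∃ x ∈ U, ψ x ≠ 0)
    (hD : ∀ x ∈ U, diracOp α ψ =O[nhds x] ψ) :
    dimH {x | x ∈ U ∧ ψ x = 0} + 2 ≤ n := by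
  obtain ⟨c, B, hc, hB⟩ := hcl.exists_isCliffordMul
  have hBD : ∀ x ∈ U, (fun y => diracTrace c (fderiv ℝ (B ∘ ψ) y)) =O[nhds x] (B ∘ ψ) := by
    intro x hx
    have hOψ := (B.isBigO_comp (diracOp α ψ) _).trans ((hD x hx).trans (B.isBigO_comp_rev ψ _))
    refine hOψ.congr' ?_ .rfl
    filter_upwards [hU.mem_nhds hx] with y hy
    exact (diracTrace_fderiv_comp_eq_diracOp (B := (B : _ →L[ℝ] _)) hB
      ((hψ.differentiableOn one_ne_zero).differentiableAt (hU.mem_nhds hy))).symm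
  have hdim := dimH_zeroSet_le_of_isPreconnected hc hU hUc
    (B.contDiff.comp_contDiffOn hψ) hBD (by simpa using hne)
  simp only [Function.comp_apply, EmbeddingLike.map_eq_zero_iff, finrank_euclideanSpace_fin] at hdim
  calc dimH {x | x ∈ U ∧ ψ x = 0} + 2 ≤ (n - 2 : ℕ) + 2 := by gcongr
    _ = n := mod_cast Nat.sub_add_cancel hn

/-- The nodal set of a nontrivial `C^{1,α}` solution of the critical Dirac equation
`Dψ = |ψ|^{2/(n-1)}ψ` on the unit ball of `ℝⁿ`, `n ≥ 3`, has Hausdorff dimension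
at most `n - 2`. -/
theorem nodal_set_dimension
    (n : ℕ) (hn : 3 ≤ n) (N : ℕ) (hN : N = 2 ^ (n / 2))
    (α : Fin n → Matrix (Fin N) (Fin N) ℂ)
    (hcl : CliffordRel α)
    (ψ : EuclideanSpace ℝ (Fin n) → EuclideanSpace ℂ (Fin N))
    -- `ψ` is `C^{1,a}` on the open unit ball for some `a ∈ (0,1)`
    (a : ℝ≥0) (ha0 : 0 < a) (ha1 : a < 1)
    (hreg : ContDiffOn ℝ 1 ψ (Metric.ball 0 1))
    (hHol : ∃ C : ℝ≥0, HolderOnWith C a (fderiv ℝ ψ) (Metric.ball 0 1))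
    -- `ψ` is not identically zero on the unit ball
    (hne : ∃ x ∈ Metric.ball (0 : EuclideanSpace ℝ (Fin n)) 1, ψ x ≠ 0)
    -- `ψ` solves the critical Dirac equation pointwise on the unit ball
    (heq : ∀ x ∈ Metric.ball (0 : EuclideanSpace ℝ (Fin n)) 1,
      diracOp α ψ x = (‖ψ x‖ ^ ((2:ℝ) / ((n:ℝ) - 1))) • ψ x) :
    dimH {x : EuclideanSpace ℝ (Fin n) | x ∈ Metric.ball (0 : EuclideanSpace ℝ (Fin n)) 1 ∧ ψ x = 0}
      ≤ (n : ℝ≥0∞) - 2 := by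
  refine ENNReal.le_sub_of_add_le_right (by simp) (nodal_set_dimension_general (by lia) hcl
    isOpen_ball (convex_ball 0 1).isPreconnected hreg hne fun x hx => ?_)
  have hn1 : (1 : ℝ) ≤ n := by exact_mod_cast (by lia : 1 ≤ n)
  have hball := isOpen_ball.mem_nhds hx
  refine (isBigO_norm_rpow_smul (hreg.continuousOn.continuousAt hball)
    (div_nonneg zero_le_two (sub_nonneg.2 hn1))).congr' ?_ .rfl
  filter_upwards [hball] with y hy using (heq y hy).symm
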